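/- arXiv:1004.5373 — 2 statements merged into one kernel-verified Lean document; each statement's English description precedes it below -/
import Mathlib

section
/- Suppose k(n)/√n → ∞ and one of the three regimes holds: (Flat) n^{3/2}V(A)/k → 0 and m/(k n^{1/2}) → c > 0; (Intermediate) n^{3/2}V(A)/k → λ > 0 and m/(k n^{1/2}) → c > 0; or (Hilly) n^{3/2}V(A)/k → ∞ and m/(V(A)n²) → c > 0. Then under both the standard distribution ST(m,n) and the planted distribution PL_A(m,n), the statistic T(Z) = Σ_i a_i q_i⁴ satisfies E[T] − 3kn²/m² → 0 and Var[T] → 0 as n → ∞. -/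
/-!
Both distributions are `M` independent uniform balls thrown on top of a fixed configuration: the
empty one with `M = m` for ST, the planting with `M = m - k` for PL. Expectations are therefore
iterates `step^[M]` of the one-ball averaging operator (`expec_stProb`, `expec_plProb`).

Write `μ = m / n` and `D = ∑ (a i - k / n) ^ 2 = n V(A)`. All three regimes give, for some `K` and
all large `n`, the bounds `k / √n ≤ K μ`, `D ≤ K μ` and `k ≤ K μ²` with `μ → ∞` (`regime_bounds`).
The last one uses that the `a i` are integers: if `2 k ≤ n` then `k ≤ 2 D`, and otherwise
`√n ≤ 2 k / √n`.

*Mean.* The content of one bin is a binomial variable shifted by at most `|a i - k / n|`, so its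
centred fourth moment is an explicit polynomial (`cstep_iter_four`) with main term `3 μ²`. The
bounds above make the remaining terms contribute `O(1 / μ)` (`mean_bound`).

*Variance.* An Efron–Stein inequality (`var_le`) bounds the variance by the number of balls times
the mean squared increment of the statistic when a ball is added. Adding a ball changes one summand
only, so covariances between bins never appear and a sixth moment bound for a single bin
(`six_le`) gives a variance of order `O(1 / μ²)` (`var_bound`).
-/

open Finset Filter Topology

/-- Probability of configuration `z` of `m` balls in `n` bins under the standard
(uniform multinomial) distribution ST(m,n). -/
noncomputable def stProb (n m : ℕ) (z : Fin n → ℕ) : ℝ :=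
  if ∑ i, z i = m then
    ((Nat.factorial m : ℝ) / ∏ i, (Nat.factorial (z i) : ℝ)) * ((n : ℝ))⁻¹ ^ m
  else 0

/-- Probability of configuration `z` of `m` balls in `n` bins under the planted
distribution PL_A(m,n) with planting `a`. -/
noncomputable def plProb (n m : ℕ) (a : Fin n → ℕ) (z : Fin n → ℕ) : ℝ :=
  if (∑ i, z i = m) ∧ (∀ i, a i ≤ z i) then
    ((Nat.factorial (m - ∑ i, a i) : ℝ) / ∏ i, (Nat.factorial (z i - a i) : ℝ)) *
      ((n : ℝ))⁻¹ ^ (m - ∑ i, a i)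
  else 0

/-- Expectation of a statistic `T` with respect to a probability function `p` on
configurations. -/
noncomputable def expec {n : ℕ} (p : (Fin n → ℕ) → ℝ) (T : (Fin n → ℕ) → ℝ) : ℝ :=
  ∑' z : Fin n → ℕ, p z * T z

/-- Variance of a statistic `T` with respect to a probability function `p`. -/
noncomputable def varOf {n : ℕ} (p : (Fin n → ℕ) → ℝ) (T : (Fin n → ℕ) → ℝ) : ℝ :=
  ∑' z : Fin n → ℕ, p z * (T z - expec p T) ^ 2

/-- Probability of a set `s` of configurations with respect to a probability
function `p`. -/
noncomputable def probOf {n : ℕ} (p : (Fin n → ℕ) → ℝ) (s : Set (Fin n → ℕ)) : ℝ :=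
  ∑' z : Fin n → ℕ, Set.indicator s p z

/-- `V(A) = (Σ_i a_i²)/n − k²/n²` where `k = Σ_i a_i`. -/
noncomputable def plantV (n : ℕ) (a : Fin n → ℕ) : ℝ :=
  (∑ i, (a i : ℝ) ^ 2) / n - ((∑ i, (a i : ℝ)) / n) ^ 2

/-- `q_i = (n/m)(z_i − m/n)`. -/
noncomputable def qStat (n m : ℕ) (z : Fin n → ℕ) (i : Fin n) : ℝ :=
  ((n : ℝ) / m) * ((z i : ℝ) - (m : ℝ) / n)

/-- The Hilly-regime statistic `H_A(Z) = Σ_i a_i q_i`. -/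
noncomputable def HStat (n m : ℕ) (a : Fin n → ℕ) (z : Fin n → ℕ) : ℝ :=
  ∑ i, (a i : ℝ) * qStat n m z i

/-- The Flat-regime statistic `F_A(Z) = Σ_i a_i q_i²`. -/
noncomputable def FStat (n m : ℕ) (a : Fin n → ℕ) (z : Fin n → ℕ) : ℝ :=
  ∑ i, (a i : ℝ) * qStat n m z i ^ 2

/-- The Intermediate-regime statistic `I_A(Z) = Σ_i a_i q_i − (1/2) Σ_i a_i q_i²`. -/
noncomputable def IStat (n m : ℕ) (a : Fin n → ℕ) (z : Fin n → ℕ) : ℝ :=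
  HStat n m a z - (1/2) * FStat n m a z

/-- The standard normal cumulative distribution function `Φ`. -/
noncomputable def stdNormalCDF (x : ℝ) : ℝ :=
  ∫ t in Set.Iic x, Real.exp (-t ^ 2 / 2) / Real.sqrt (2 * Real.pi)

/-- Total variation distance `TV_A(m,n)` between ST(m,n) and PL_A(m,n). -/
noncomputable def tvDist (n m : ℕ) (a : Fin n → ℕ) : ℝ :=
  (1/2) * ∑' z : Fin n → ℕ, |stProb n m z - plProb n m a z|

/-- The Flat regime: `n^{3/2} V(A)/k → 0` and `m/(k n^{1/2}) → c`. -/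
def FlatRegime (A : (n : ℕ) → Fin n → ℕ) (m k : ℕ → ℕ) (c : ℝ) : Prop :=
  Tendsto (fun n : ℕ => (n : ℝ) ^ ((3 : ℝ)/2) * plantV n (A n) / (k n : ℝ)) atTop (𝓝 0) ∧
  Tendsto (fun n : ℕ => (m n : ℝ) / ((k n : ℝ) * Real.sqrt n)) atTop (𝓝 c)

/-- The Intermediate regime: `n^{3/2} V(A)/k → λ` and `m/(k n^{1/2}) → c`. -/
def IntermediateRegime (A : (n : ℕ) → Fin n → ℕ) (m k : ℕ → ℕ) (lam c : ℝ) : Prop :=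
  Tendsto (fun n : ℕ => (n : ℝ) ^ ((3 : ℝ)/2) * plantV n (A n) / (k n : ℝ)) atTop (𝓝 lam) ∧
  Tendsto (fun n : ℕ => (m n : ℝ) / ((k n : ℝ) * Real.sqrt n)) atTop (𝓝 c)

/-- The Hilly regime: `n^{3/2} V(A)/k → ∞` and `m/(V(A) n²) → c`. -/
def HillyRegime (A : (n : ℕ) → Fin n → ℕ) (m k : ℕ → ℕ) (c : ℝ) : Prop :=
  Tendsto (fun n : ℕ => (n : ℝ) ^ ((3 : ℝ)/2) * plantV n (A n) / (k n : ℝ)) atTop atTop ∧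
  Tendsto (fun n : ℕ => (m n : ℝ) / (plantV n (A n) * (n : ℝ) ^ 2)) atTop (𝓝 c)

/-- One of the three regimes holds (with its positive constants). -/
def SomeRegime (A : (n : ℕ) → Fin n → ℕ) (m k : ℕ → ℕ) : Prop :=
  (∃ c : ℝ, 0 < c ∧ FlatRegime A m k c) ∨
  (∃ lam c : ℝ, 0 < lam ∧ 0 < c ∧ IntermediateRegime A m k lam c) ∨
  (∃ c : ℝ, 0 < c ∧ HillyRegime A m k c)

/-! ### The one-ball averaging operator -/

/-- Averaging over the bin that receives one additional ball. The expectation over `M` independent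
uniform balls thrown on top of the configuration `z` is `step^[M] h z`. -/
noncomputable def step {n : ℕ} (h : (Fin n → ℕ) → ℝ) (z : Fin n → ℕ) : ℝ :=
  (∑ i, h (z + Pi.single i 1)) / n

/-- The mean squared increment of `h` when one uniform ball is added. -/
noncomputable def sqInc {n : ℕ} (h : (Fin n → ℕ) → ℝ) (z : Fin n → ℕ) : ℝ :=
  (∑ i, (h (z + Pi.single i 1) - h z) ^ 2) / n

theorem step_iter_mono {n : ℕ} (M : ℕ) {f g : (Fin n → ℕ) → ℝ} (h : ∀ z, f z ≤ g z)
    (z : Fin n → ℕ) : step^[M] f z ≤ step^[M] g z := by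
  induction M generalizing z with
  | zero => exact h z
  | succ M ih =>
    rw [Function.iterate_succ_apply', Function.iterate_succ_apply', step, step]
    gcongr with i
    exact ih _

theorem step_iter_add {n : ℕ} (M : ℕ) (f g : (Fin n → ℕ) → ℝ) (z : Fin n → ℕ) :
    step^[M] (fun y => f y + g y) z = step^[M] f z + step^[M] g z := by
  induction M generalizing z with
  | zero => rfl
  | succ M ih =>
    simp only [Function.iterate_succ_apply', step, ih, Finset.sum_add_distrib, add_div]

theorem step_iter_mul {n : ℕ} (M : ℕ) (c : ℝ) (f : (Fin n → ℕ) → ℝ) (z : Fin n → ℕ) :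
    step^[M] (fun y => c * f y) z = c * step^[M] f z := by
  induction M generalizing z with
  | zero => rfl
  | succ M ih =>
    simp only [Function.iterate_succ_apply', step, ih, ← Finset.mul_sum, mul_div_assoc]

theorem step_iter_const {n : ℕ} (hn : 0 < n) (M : ℕ) (c : ℝ) (z : Fin n → ℕ) :
    step^[M] (fun _ => c) z = c := by
  induction M generalizing z with
  | zero => rfl
  | succ M ih =>
    have : (n : ℝ) ≠ 0 := by positivity
    simp only [Function.iterate_succ_apply', step, ih, Finset.sum_const, Finset.card_univ,
      Fintype.card_fin, nsmul_eq_mul]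
    field_simp

theorem step_iter_sum {n : ℕ} {ι : Type*} (s : Finset ι) (M : ℕ) (f : ι → (Fin n → ℕ) → ℝ)
    (z : Fin n → ℕ) :
    step^[M] (fun y => ∑ i ∈ s, f i y) z = ∑ i ∈ s, step^[M] (f i) z := by
  induction M generalizing z with
  | zero => rfl
  | succ M ih =>
    simp only [Function.iterate_succ_apply', step, ih]
    rw [Finset.sum_comm, Finset.sum_div]

/-! ### An Efron–Stein inequality for balls in bins -/

/-- Jensen's inequality, together with the fact that adding two balls is a commutative operation. -/
theorem sqInc_step_le {n : ℕ} (h : (Fin n → ℕ) → ℝ) (z : Fin n → ℕ) :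
    sqInc (step h) z ≤ step (sqInc h) z := by
  rcases Nat.eq_zero_or_pos n with rfl | hn
  · simp [sqInc, step]
  have hn' : (0 : ℝ) < n := by positivity
  unfold sqInc step
  have key : ∀ i : Fin n, ((∑ j, h (z + Pi.single i 1 + Pi.single j 1)) / (n : ℝ) -
      (∑ j, h (z + Pi.single j 1)) / n) ^ 2 ≤
      (∑ j, (h (z + Pi.single j 1 + Pi.single i 1) - h (z + Pi.single j 1)) ^ 2) / n := by
    intro i
    rw [← sub_div, ← Finset.sum_sub_distrib, div_pow, div_le_div_iff₀ (by positivity) hn']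
    have := sq_sum_le_card_mul_sum_sq (s := (Finset.univ : Finset (Fin n)))
      (f := fun j => h (z + Pi.single i 1 + Pi.single j 1) - h (z + Pi.single j 1))
    simp only [Finset.card_univ, Fintype.card_fin] at this
    simp only [add_right_comm z _ (Pi.single i 1)]
    simp only [add_right_comm z (Pi.single i 1)] at this ⊢
    nlinarith
  calc _ ≤ (∑ i : Fin n, (∑ j, (h (z + Pi.single j 1 + Pi.single i 1) -
        h (z + Pi.single j 1)) ^ 2) / (n : ℝ)) / n := by
        gcongr with i
        exact key i
    _ = _ := by
        rw [← Finset.sum_div, ← Finset.sum_div, Finset.sum_comm]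

/-- The variance of a variable is at most its second moment around any point. -/
theorem step_sq_sub_le {n : ℕ} (h : (Fin n → ℕ) → ℝ) (z : Fin n → ℕ) :
    step (fun y => h y ^ 2) z - step h z ^ 2 ≤ sqInc h z := by
  rcases Nat.eq_zero_or_pos n with rfl | hn
  · simp [sqInc, step]
  have hn' : (n : ℝ) ≠ 0 := by positivity
  have e : sqInc h z = step (fun y => h y ^ 2) z - 2 * h z * step h z + h z ^ 2 := by
    unfold sqInc step
    simp only [sub_sq, Finset.sum_add_distrib, Finset.sum_sub_distrib, Finset.sum_const,
      Finset.card_univ, Fintype.card_fin, nsmul_eq_mul, ← Finset.sum_mul, ← Finset.mul_sum]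
    field_simp
  nlinarith [sq_nonneg (h z - step h z)]

/-- Efron–Stein: the variance over `M + 1` balls is at most `M + 1` times the expected mean squared
increment caused by the last ball. -/
theorem var_le {n : ℕ} (M : ℕ) (h : (Fin n → ℕ) → ℝ) (z : Fin n → ℕ) :
    step^[M + 1] (fun y => h y ^ 2) z - (step^[M + 1] h z) ^ 2 ≤
      (M + 1) * step^[M] (sqInc h) z := by
  induction M generalizing h with
  | zero => simpa using step_sq_sub_le h z
  | succ M ih =>
    have h1 := ih (step h)
    have h2 : step^[M + 1] (step (fun y => h y ^ 2)) z ≤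
        step^[M + 1] (sqInc h) z + step^[M + 1] (fun y => step h y ^ 2) z := by
      rw [← step_iter_add]
      exact step_iter_mono _ (fun y => by linarith [step_sq_sub_le h y]) z
    have h3 : step^[M] (sqInc (step h)) z ≤ step^[M + 1] (sqInc h) z := by
      rw [Function.iterate_succ_apply]
      exact step_iter_mono _ (sqInc_step_le h) z
    rw [Function.iterate_succ_apply, Function.iterate_succ_apply _ (M + 1) h]
    push_cast
    nlinarith [(Nat.cast_nonneg M : (0 : ℝ) ≤ M)]

/-! ### Identification with the multinomial expectations -/

theorem stProb_succ {n : ℕ} (hn : 0 < n) (m : ℕ) (z : Fin n → ℕ) (i : Fin n) :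
    stProb n m z = n / (m + 1) * ((z i + 1 : ℕ) : ℝ) * stProb n (m + 1) (z + Pi.single i 1) := by
  have hs : ∑ j, (z + Pi.single i 1 : Fin n → ℕ) j = ∑ j, z j + 1 := by
    simp [Finset.sum_add_distrib]
  have hp : ∏ j, (Nat.factorial ((z + Pi.single i 1 : Fin n → ℕ) j) : ℝ) =
      ((z i + 1 : ℕ) : ℝ) * ∏ j, (Nat.factorial (z j) : ℝ) := by
    rw [← Finset.mul_prod_erase _ _ (Finset.mem_univ i),
      ← Finset.mul_prod_erase _ (fun j => (Nat.factorial (z j) : ℝ)) (Finset.mem_univ i),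
      ← mul_assoc]
    congr 1
    · simp [Nat.factorial_succ]
    · refine Finset.prod_congr rfl fun j hj => ?_
      simp [Finset.ne_of_mem_erase hj]
  unfold stProb
  rw [hs, hp]
  by_cases h : ∑ j, z j = m
  · have hn' : (n : ℝ) ≠ 0 := by positivity
    have : ∏ j, (Nat.factorial (z j) : ℝ) ≠ 0 := by positivity
    have h2 : ((z i + 1 : ℕ) : ℝ) ≠ 0 := by positivity
    have h3 : (m : ℝ) + 1 ≠ 0 := by positivity
    rw [if_pos h, if_pos (by rw [h]), Nat.factorial_succ, pow_succ]
    push_cast at h2 ⊢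
    field_simp
  · rw [if_neg h, if_neg (by omega), mul_zero]

theorem stProb_summable {n : ℕ} (m : ℕ) (T : (Fin n → ℕ) → ℝ) :
    Summable (fun z => stProb n m z * T z) := by
  refine summable_of_ne_finset_zero (s := Finset.piAntidiag Finset.univ m) fun z hz => ?_
  have : ¬ ∑ i, z i = m := fun h => hz (by simp [h])
  simp [stProb, this]

theorem expec_stProb_succ {n : ℕ} (hn : 0 < n) (m : ℕ) (T : (Fin n → ℕ) → ℝ) :
    expec (stProb n (m + 1)) T =
      (∑ i, expec (stProb n m) (fun z => T (z + Pi.single i 1))) / n := by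
  have hn' : (n : ℝ) ≠ 0 := by positivity
  have key : ∀ i : Fin n, expec (stProb n m) (fun z => T (z + Pi.single i 1)) =
      ∑' z : Fin n → ℕ, stProb n (m + 1) z * ((n : ℝ) / (m + 1) * (z i : ℝ) * T z) := by
    intro i
    have inj : Function.Injective (fun z : Fin n → ℕ => z + Pi.single i 1) :=
      add_left_injective _
    rw [← inj.tsum_eq]
    · refine tsum_congr fun z => ?_
      rw [stProb_succ hn m z i]
      simp
      ring
    · intro z hz
      have hz0 : z i ≠ 0 := fun h0 => hz (by simp [h0])
      refine ⟨z - Pi.single i 1, ?_⟩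
      ext j
      by_cases hj : j = i
      · subst hj; simp; omega
      · simp [hj]
  simp only [key]
  rw [← Summable.tsum_finsetSum (fun i _ => stProb_summable _ _), ← tsum_div_const]
  refine tsum_congr fun z => ?_
  by_cases h : ∑ i, z i = m + 1
  · have h' : ∑ i, (z i : ℝ) = m + 1 := by exact_mod_cast h
    have : (m : ℝ) + 1 ≠ 0 := by positivity
    rw [← Finset.mul_sum, ← Finset.sum_mul, ← Finset.mul_sum, h']
    field_simp
  · simp [stProb, h]

theorem expec_stProb {n : ℕ} (hn : 0 < n) (m : ℕ) (T : (Fin n → ℕ) → ℝ) :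
    expec (stProb n m) T = step^[m] T 0 := by
  induction m generalizing T with
  | zero =>
    unfold expec
    rw [tsum_eq_single 0]
    · simp [stProb]
    · intro z hz
      have : ¬ ∑ i, z i = 0 := fun h => hz (by
        ext i
        exact (Finset.sum_eq_zero_iff.1 h) i (Finset.mem_univ i))
      simp only [stProb, if_neg this, zero_mul]
  | succ m ih =>
    rw [expec_stProb_succ hn, Function.iterate_succ_apply]
    simp only [ih]
    rw [← step_iter_sum, div_eq_inv_mul, ← step_iter_mul]
    refine congrArg (fun f => step^[m] f 0) ?_
    funext z
    rw [step, div_eq_inv_mul]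

/-- The planted distribution is the standard one with `m - k` balls, translated by the planting. -/
theorem expec_plProb {n : ℕ} (m : ℕ) (a : Fin n → ℕ) (ha : ∑ i, a i ≤ m)
    (T : (Fin n → ℕ) → ℝ) :
    expec (plProb n m a) T = expec (stProb n (m - ∑ i, a i)) (fun y => T (y + a)) := by
  have inj : Function.Injective (fun z : Fin n → ℕ => z + a) := add_left_injective _
  unfold expec
  rw [← inj.tsum_eq]
  · refine tsum_congr fun y => ?_
    congr 1
    have hs : ∑ i, (y + a) i = ∑ i, y i + ∑ i, a i := by simp [Finset.sum_add_distrib]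
    unfold plProb stProb
    rw [hs]
    by_cases h : ∑ i, y i = m - ∑ i, a i
    · rw [if_pos h, if_pos ⟨by omega, fun i => by simp⟩]
      simp
    · rw [if_neg h, if_neg (fun hh => h (by omega))]
  · intro z hz
    have hz0 : ∀ i, a i ≤ z i := by
      by_contra hc
      exact hz (by simp [plProb, hc])
    refine ⟨z - a, ?_⟩
    ext j
    simp [hz0 j]

/-- `varOf` as second moment minus squared mean, for the law of `M` uniform balls thrown on top of
the fixed configuration `b`. -/
theorem varOf_eq {n : ℕ} (hn : 0 < n) (p : (Fin n → ℕ) → ℝ) (M : ℕ) (b : Fin n → ℕ)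
    (hp : ∀ T, expec p T = step^[M] (fun y => T (y + b)) 0) (T : (Fin n → ℕ) → ℝ) :
    varOf p T = step^[M] (fun y => T (y + b) ^ 2) 0 - (step^[M] (fun y => T (y + b)) 0) ^ 2 := by
  have h := hp (fun z => (T z - expec p T) ^ 2)
  have h' : varOf p T = expec p (fun z => (T z - expec p T) ^ 2) := rfl
  set E := expec p T with hE
  have e : (fun y : Fin n → ℕ => (T (y + b) - E) ^ 2) =
      fun y => T (y + b) ^ 2 + ((-2 * E) * T (y + b) + E ^ 2) := by
    funext y; ring
  rw [h', h, e, step_iter_add, step_iter_add, step_iter_mul, step_iter_const hn, ← hp T, ← hE]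
  ring

/-! ### Moments of a single bin -/

/-- Averaging over one centred Bernoulli(`p`) increment. -/
noncomputable def cstep (p : ℝ) (φ : ℝ → ℝ) (x : ℝ) : ℝ :=
  p * φ (x + (1 - p)) + (1 - p) * φ (x - p)

/-- A function of the centred content of one bin evolves by `cstep`. -/
theorem step_single {n : ℕ} (hn : 0 < n) (i : Fin n) (φ : ℝ → ℝ) (c : ℝ) :
    step (fun z : Fin n → ℕ => φ ((z i : ℝ) + (c - (n : ℝ)⁻¹))) =
      fun z => cstep (n : ℝ)⁻¹ φ ((z i : ℝ) + c) := by
  have hn' : (n : ℝ) ≠ 0 := by positivity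
  funext z
  unfold step cstep
  rw [← Finset.add_sum_erase _ _ (Finset.mem_univ i)]
  have : ∀ j ∈ Finset.univ.erase i,
      φ ((((z + Pi.single j 1 : Fin n → ℕ) i : ℕ) : ℝ) + (c - (n : ℝ)⁻¹)) =
        φ ((z i : ℝ) + c - (n : ℝ)⁻¹) := by
    intro j hj
    have hj' : i ≠ j := (Finset.ne_of_mem_erase hj).symm
    simp [hj', add_sub_assoc]
  rw [Finset.sum_congr rfl this, Finset.sum_const, Finset.card_erase_of_mem (Finset.mem_univ i),
    Finset.card_univ, Fintype.card_fin, nsmul_eq_mul, Nat.cast_sub hn]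
  have e : (((z + Pi.single i 1 : Fin n → ℕ) i : ℕ) : ℝ) + (c - (n : ℝ)⁻¹) =
      (z i : ℝ) + c + (1 - (n : ℝ)⁻¹) := by
    simp; ring
  beta_reduce
  rw [e]
  field_simp
  push_cast
  ring

theorem step_iter_single {n : ℕ} (hn : 0 < n) (M : ℕ) (i : Fin n) (φ : ℝ → ℝ) (c : ℝ) :
    step^[M] (fun z : Fin n → ℕ => φ ((z i : ℝ) + (c - M * (n : ℝ)⁻¹))) 0 =
      (cstep (n : ℝ)⁻¹)^[M] φ c := by
  induction M generalizing φ with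
  | zero => simp
  | succ M ih =>
    rw [Function.iterate_succ_apply, Function.iterate_succ_apply, ← ih]
    have := step_single hn i φ (c - M * (n : ℝ)⁻¹)
    rw [← this]
    refine congrArg (fun f => step^[M] (step f) 0) ?_
    funext z
    congr 1
    push_cast
    ring

theorem cstep_iter_four (p : ℝ) (M : ℕ) :
    (cstep p)^[M] (fun x => x ^ 4) = fun x => x ^ 4 + 6 * (M * (p * (1 - p))) * x ^ 2 +
      4 * (M * (p * (1 - p)) * (1 - 2 * p)) * x +
      (M * (p * (1 - p)) * (1 - 6 * (p * (1 - p))) + 3 * (M * (p * (1 - p))) ^ 2) := by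
  induction M with
  | zero => simp
  | succ M ih =>
    rw [Function.iterate_succ_apply', ih]
    funext x; unfold cstep; push_cast; ring

/-- The coefficients come from the cumulants `κ₂, …, κ₆` of a Bernoulli variable. -/
theorem cstep_iter_six (p : ℝ) (M : ℕ) :
    (cstep p)^[M] (fun x => x ^ 6) = fun x => x ^ 6 + 15 * (M * (p * (1 - p))) * x ^ 4 +
      20 * (M * (p * (1 - p)) * (1 - 2 * p)) * x ^ 3 +
      15 * (M * (p * (1 - p)) * (1 - 6 * (p * (1 - p))) + 3 * (M * (p * (1 - p))) ^ 2) * x ^ 2 +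
      6 * (M * (p * (1 - p)) * (1 - 2 * p) * (1 - 12 * (p * (1 - p))) +
        10 * (M * (p * (1 - p))) ^ 2 * (1 - 2 * p)) * x +
      (M * (p * (1 - p)) * (1 - 30 * (p * (1 - p)) + 120 * (p * (1 - p)) ^ 2) +
        15 * (M * (p * (1 - p))) ^ 2 * (1 - 6 * (p * (1 - p))) +
        10 * (M * (p * (1 - p))) ^ 2 * (1 - 2 * p) ^ 2 + 15 * (M * (p * (1 - p))) ^ 3) := by
  induction M with
  | zero => simp
  | succ M ih =>
    rw [Function.iterate_succ_apply', ih]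
    funext x; unfold cstep; push_cast; ring

theorem six_le {p : ℝ} (hp0 : 0 ≤ p) (hp1 : p ≤ 1) (M : ℕ) {μ : ℝ} (hμ : 1 ≤ μ)
    (hM : M * p ≤ μ) : (cstep p)^[M] (fun x => x ^ 6) 0 ≤ 41 * μ ^ 3 := by
  rw [cstep_iter_six]
  have hv0 : 0 ≤ p * (1 - p) := mul_nonneg hp0 (by linarith)
  have hv1 : p * (1 - p) ≤ 1 / 4 := by nlinarith [sq_nonneg (p - 1 / 2)]
  have hs : M * (p * (1 - p)) ≤ μ := by
    have : (M : ℝ) * p * (1 - p) ≤ M * p * 1 := by gcongr; linarith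
    nlinarith
  have hs0 : 0 ≤ M * (p * (1 - p)) := by positivity
  have ht : (1 - 2 * p) ^ 2 ≤ 1 := by nlinarith
  generalize (1 - 2 * p) ^ 2 = t at *
  generalize p * (1 - p) = v at *
  generalize M * v = s at *
  have h1 : s * (1 - 30 * v + 120 * v ^ 2) ≤ s * 1 :=
    mul_le_mul_of_nonneg_left (by nlinarith) hs0
  have h2 : 15 * s ^ 2 * (1 - 6 * v) ≤ 15 * s ^ 2 * 1 := by gcongr; linarith
  have h3 : 10 * s ^ 2 * t ≤ 10 * s ^ 2 * 1 := by gcongr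
  have h4 : s ^ 2 ≤ μ ^ 2 := by gcongr
  have h5 : s ^ 3 ≤ μ ^ 3 := by gcongr
  have h6 : μ ^ 2 ≤ μ ^ 3 := pow_le_pow_right₀ hμ (by norm_num)
  have h7 : μ ≤ μ ^ 3 := le_self_pow₀ hμ (by norm_num)
  simp only [ne_eq, OfNat.ofNat_ne_zero, not_false_eq_true, zero_pow, mul_zero, zero_add]
  linarith

/-! ### Power sums of the planting -/

/-- The quantitative content shared by the three regimes: `μ = m / n`, and `∑ (a i - k / n) ^ 2`
is `n * V(A)`. -/
structure Bounds (n : ℕ) (a : Fin n → ℕ) (k : ℕ) (μ K : ℝ) : Prop where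
  pos : 0 < n
  sum : ∑ i, a i = k
  one_le_K : 1 ≤ K
  one_le : 1 ≤ μ
  dev : ∑ i, ((a i : ℝ) - k / n) ^ 2 ≤ K * μ
  sq_le : (k : ℝ) ^ 2 ≤ K ^ 2 * μ ^ 2 * n
  le_sq : (k : ℝ) ≤ K * μ ^ 2

theorem sum_pow_le {ι : Type*} (s : Finset ι) (e : ι → ℝ) {B : ℝ} (hB : ∑ i ∈ s, e i ^ 2 ≤ B)
    (r : ℕ) : ∑ i ∈ s, e i ^ (2 * (r + 1)) ≤ B ^ (r + 1) := by
  have hB0 : 0 ≤ B := le_trans (Finset.sum_nonneg fun i _ => sq_nonneg _) hB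
  induction r with
  | zero => simpa using hB
  | succ r ih =>
    calc ∑ i ∈ s, e i ^ (2 * (r + 1 + 1)) ≤ ∑ i ∈ s, B * e i ^ (2 * (r + 1)) := by
          refine Finset.sum_le_sum fun i hi => ?_
          have h1 : e i ^ 2 ≤ B :=
            le_trans (Finset.single_le_sum (f := fun i => e i ^ 2)
              (fun j _ => sq_nonneg _) hi) hB
          have h2 : 0 ≤ e i ^ (2 * (r + 1)) := by rw [pow_mul]; positivity
          calc e i ^ (2 * (r + 1 + 1)) = e i ^ 2 * e i ^ (2 * (r + 1)) := by ring
            _ ≤ _ := by gcongr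
      _ ≤ B * B ^ (r + 1) := by rw [← Finset.mul_sum]; gcongr
      _ = B ^ (r + 1 + 1) := by ring

namespace Bounds

variable {n : ℕ} {a : Fin n → ℕ} {k : ℕ} {μ K : ℝ}

theorem sumR (h : Bounds n a k μ K) : ∑ i, (a i : ℝ) = k := by
  exact_mod_cast h.sum

theorem avg_le (h : Bounds n a k μ K) : (k : ℝ) / n ≤ K * μ := by
  have hn : (1 : ℝ) ≤ n := by exact_mod_cast h.pos
  have hK := h.one_le_K
  have hμ := h.one_le
  rw [div_le_iff₀ (by linarith)]
  refine (sq_le_sq₀ (by positivity) (by positivity)).1 ?_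
  have := h.sq_le
  calc (k : ℝ) ^ 2 ≤ K ^ 2 * μ ^ 2 * n := this
    _ ≤ K ^ 2 * μ ^ 2 * n ^ 2 := by gcongr; nlinarith
    _ = _ := by ring

theorem sum_mul_sq_le (h : Bounds n a k μ K) :
    ∑ i, (a i : ℝ) * ((a i : ℝ) - k / n) ^ 2 ≤ 3 * K ^ 2 * μ ^ 2 := by
  have hK := h.one_le_K
  have hμ := h.one_le
  have h2 := sum_pow_le _ _ h.dev 0
  have h4 := sum_pow_le _ _ h.dev 1
  norm_num at h2 h4
  have hb : ∀ i, (a i : ℝ) * ((a i : ℝ) - k / n) ^ 2 ≤ ((a i : ℝ) - k / n) ^ 2 +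
      ((a i : ℝ) - k / n) ^ 4 + k / n * ((a i : ℝ) - k / n) ^ 2 := by
    intro i
    generalize (k : ℝ) / n = x
    have : (a i : ℝ) - x ≤ 1 + ((a i : ℝ) - x) ^ 2 := by nlinarith [sq_nonneg ((a i : ℝ) - x - 1)]
    nlinarith [sq_nonneg ((a i : ℝ) - x)]
  have := Finset.sum_le_sum (s := Finset.univ) fun i _ => hb i
  rw [Finset.sum_add_distrib, Finset.sum_add_distrib, ← Finset.mul_sum] at this
  have h5 : (k : ℝ) / n * ∑ i, ((a i : ℝ) - k / n) ^ 2 ≤ (K * μ) * (K * μ) := by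
    gcongr
    · exact h.avg_le
  have h6 : K * μ ≤ (K * μ) ^ 2 := le_self_pow₀ (one_le_mul_of_one_le_of_one_le hK hμ) (by norm_num)
  nlinarith

theorem sum_mul_four_le (h : Bounds n a k μ K) :
    ∑ i, (a i : ℝ) * ((a i : ℝ) - k / n) ^ 4 ≤ 3 * K ^ 3 * μ ^ 3 := by
  have hK := h.one_le_K
  have hμ := h.one_le
  have h4 := sum_pow_le _ _ h.dev 1
  have h6 := sum_pow_le _ _ h.dev 2
  norm_num at h4 h6
  have hb : ∀ i, (a i : ℝ) * ((a i : ℝ) - k / n) ^ 4 ≤ ((a i : ℝ) - k / n) ^ 4 +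
      ((a i : ℝ) - k / n) ^ 6 + k / n * ((a i : ℝ) - k / n) ^ 4 := by
    intro i
    generalize (k : ℝ) / n = x
    have : (a i : ℝ) - x ≤ 1 + ((a i : ℝ) - x) ^ 2 := by nlinarith [sq_nonneg ((a i : ℝ) - x - 1)]
    have h0 : 0 ≤ ((a i : ℝ) - x) ^ 4 := by positivity
    nlinarith
  have := Finset.sum_le_sum (s := Finset.univ) fun i _ => hb i
  rw [Finset.sum_add_distrib, Finset.sum_add_distrib, ← Finset.mul_sum] at this
  have h5 : (k : ℝ) / n * ∑ i, ((a i : ℝ) - k / n) ^ 4 ≤ (K * μ) * (K * μ) ^ 2 := by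
    gcongr
    · exact h.avg_le
  have h7 : (K * μ) ^ 2 ≤ (K * μ) ^ 3 :=
    pow_le_pow_right₀ (one_le_mul_of_one_le_of_one_le hK hμ) (by norm_num)
  nlinarith

theorem sum_sq_le (h : Bounds n a k μ K) : ∑ i, (a i : ℝ) ^ 2 ≤ 2 * K ^ 2 * μ ^ 2 := by
  have hK := h.one_le_K
  have hμ := h.one_le
  have hn : (0 : ℝ) < n := by exact_mod_cast h.pos
  have e : ∑ i, ((a i : ℝ) - k / n) ^ 2 = ∑ i, (a i : ℝ) ^ 2 - (k : ℝ) ^ 2 / n := by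
    simp only [sub_sq, Finset.sum_add_distrib, Finset.sum_sub_distrib, Finset.sum_const,
      Finset.card_univ, Fintype.card_fin, nsmul_eq_mul, ← Finset.sum_mul, ← Finset.mul_sum, h.sumR]
    field_simp
    ring
  have h1 : (k : ℝ) ^ 2 / n ≤ K ^ 2 * μ ^ 2 := (div_le_iff₀ hn).2 h.sq_le
  have h2 := h.dev
  have h6 : K * μ ≤ (K * μ) ^ 2 := le_self_pow₀ (one_le_mul_of_one_le_of_one_le hK hμ) (by norm_num)
  nlinarith

theorem sum_sq_mul_six_le (h : Bounds n a k μ K) :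
    ∑ i, (a i : ℝ) ^ 2 * ((a i : ℝ) - k / n) ^ 6 ≤ 4 * K ^ 5 * μ ^ 5 := by
  have hK := h.one_le_K
  have hμ := h.one_le
  have h6 := sum_pow_le _ _ h.dev 2
  have h8 := sum_pow_le _ _ h.dev 3
  norm_num at h6 h8
  have hb : ∀ i, (a i : ℝ) ^ 2 * ((a i : ℝ) - k / n) ^ 6 ≤ 2 * ((a i : ℝ) - k / n) ^ 8 +
      2 * (k / n) ^ 2 * ((a i : ℝ) - k / n) ^ 6 := by
    intro i
    generalize (k : ℝ) / n = x
    have : (a i : ℝ) ^ 2 ≤ 2 * ((a i : ℝ) - x) ^ 2 + 2 * x ^ 2 := by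
      nlinarith [sq_nonneg ((a i : ℝ) - 2 * x)]
    have h0 : 0 ≤ ((a i : ℝ) - x) ^ 6 := by positivity
    nlinarith
  have := Finset.sum_le_sum (s := Finset.univ) fun i _ => hb i
  rw [Finset.sum_add_distrib, ← Finset.mul_sum, ← Finset.mul_sum] at this
  have h5 : 2 * ((k : ℝ) / n) ^ 2 * ∑ i, ((a i : ℝ) - k / n) ^ 6 ≤
      2 * (K * μ) ^ 2 * (K * μ) ^ 3 := by
    gcongr
    · exact h.avg_le
  have h7 : (K * μ) ^ 4 ≤ (K * μ) ^ 5 :=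
    pow_le_pow_right₀ (one_le_mul_of_one_le_of_one_le hK hμ) (by norm_num)
  nlinarith

end Bounds

/-! ### Mean and variance of the statistic -/

set_option maxHeartbeats 1000000 in
theorem mean_bound {n : ℕ} {a : Fin n → ℕ} {k : ℕ} {μ K : ℝ} (h : Bounds n a k μ K) (M : ℕ)
    (hM : M * (n : ℝ)⁻¹ ≤ μ) (hM' : μ - k / n ≤ M * (n : ℝ)⁻¹) (d : Fin n → ℝ)
    (hd : ∀ i, |d i| ≤ |(a i : ℝ) - k / n|) :
    |step^[M] (fun y : Fin n → ℕ =>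
        ∑ i, (a i : ℝ) * (μ⁻¹ * ((y i : ℝ) + (d i - M * (n : ℝ)⁻¹))) ^ 4) 0 - 3 * k / μ ^ 2| ≤
      54 * K ^ 3 / μ := by
  have hK := h.one_le_K
  have hμ := h.one_le
  have hn : (1 : ℝ) ≤ n := by exact_mod_cast h.pos
  set p := (n : ℝ)⁻¹ with hp
  have hp0 : 0 ≤ p := by positivity
  have hp1 : p ≤ 1 := inv_le_one_of_one_le₀ hn
  have hkn : (k : ℝ) / n = k * p := by rw [hp, div_eq_mul_inv]
  set s := M * (p * (1 - p)) with hs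
  set c := s * (1 - 6 * (p * (1 - p))) + 3 * s ^ 2 with hc
  have hv0 : 0 ≤ p * (1 - p) := mul_nonneg hp0 (by linarith)
  have hv1 : p * (1 - p) ≤ 1 / 4 := by nlinarith [sq_nonneg (p - 1 / 2)]
  have hs0 : 0 ≤ s := by positivity
  have hMp0 : 0 ≤ M * p := by positivity
  have hs1 : s ≤ μ := by
    have : s = M * p - M * p * p := by rw [hs]; ring
    nlinarith
  have hs2 : μ - s ≤ k * p + μ * p := by
    have : s = M * p - M * p * p := by rw [hs]; ring
    nlinarith
  have hkp : k * p ≤ K * μ := hkn ▸ h.avg_le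
  -- the expectation in closed form
  have hE : step^[M] (fun y : Fin n → ℕ =>
      ∑ i, (a i : ℝ) * (μ⁻¹ * ((y i : ℝ) + (d i - M * p))) ^ 4) 0 =
      ∑ i, (a i : ℝ) * (μ⁻¹ ^ 4 * (d i ^ 4 + 6 * s * d i ^ 2 + 4 * (s * (1 - 2 * p)) * d i + c)) := by
    rw [step_iter_sum]
    refine Finset.sum_congr rfl fun i _ => ?_
    simp only [mul_pow]
    rw [step_iter_mul, step_iter_mul]
    have := step_iter_single h.pos M i (fun x => x ^ 4) (d i)
    rw [← hp, cstep_iter_four] at this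
    rw [this]
  have hμ4 : 0 < μ ^ 4 := by positivity
  have hdiff : step^[M] (fun y : Fin n → ℕ =>
      ∑ i, (a i : ℝ) * (μ⁻¹ * ((y i : ℝ) + (d i - M * p))) ^ 4) 0 - 3 * k / μ ^ 2 =
      (∑ i, (a i : ℝ) * (d i ^ 4 + 6 * s * d i ^ 2 + 4 * (s * (1 - 2 * p)) * d i +
        (c - 3 * μ ^ 2))) / μ ^ 4 := by
    rw [hE, ← h.sumR, Finset.mul_sum, Finset.sum_div, Finset.sum_div, ← Finset.sum_sub_distrib]
    refine Finset.sum_congr rfl fun i _ => ?_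
    field_simp
    ring
  have hc1 : |c - 3 * μ ^ 2| ≤ μ + 6 * μ * (k * p) + 6 * μ ^ 2 * p := by
    have e1 : s * (1 - 6 * (p * (1 - p))) ≤ s * 1 :=
      mul_le_mul_of_nonneg_left (by linarith) hs0
    have e2 : s * (-1) ≤ s * (1 - 6 * (p * (1 - p))) :=
      mul_le_mul_of_nonneg_left (by linarith) hs0
    have e3 : (μ - s) * (μ + s) ≤ (k * p + μ * p) * (2 * μ) := by
      gcongr
      linarith
    have e4 : 0 ≤ (μ - s) * (μ + s) := mul_nonneg (by linarith) (by linarith)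
    rw [abs_le]
    have : 0 ≤ k * p := by positivity
    constructor
    · rw [hc]; nlinarith
    · rw [hc]
      have : 0 ≤ 6 * μ * (k * p) + 6 * μ ^ 2 * p := by positivity
      nlinarith
  have f1 : |4 * (s * (1 - 2 * p))| ≤ 4 * μ := by
    have e1 : s * (1 - 2 * p) ≤ s * 1 := mul_le_mul_of_nonneg_left (by linarith) hs0
    have e2 : s * (-1) ≤ s * (1 - 2 * p) := mul_le_mul_of_nonneg_left (by linarith) hs0
    rw [abs_le]; constructor <;> linarith
  have hterm : ∀ i, |(a i : ℝ) * (d i ^ 4 + 6 * s * d i ^ 2 + 4 * (s * (1 - 2 * p)) * d i +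
        (c - 3 * μ ^ 2))| ≤ a i * ((a i : ℝ) - k / n) ^ 4 +
        10 * μ * (a i * ((a i : ℝ) - k / n) ^ 2) +
        (4 * μ + (μ + 6 * μ * (k * p) + 6 * μ ^ 2 * p)) * a i := by
    intro i
    rw [abs_mul, Nat.abs_cast]
    have hsq : d i ^ 2 ≤ ((a i : ℝ) - k / n) ^ 2 := sq_le_sq.2 (hd i)
    have hq : d i ^ 4 ≤ ((a i : ℝ) - k / n) ^ 4 := by
      have := pow_le_pow_left₀ (sq_nonneg _) hsq 2
      rw [← pow_mul, ← pow_mul] at this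
      exact this
    have hlin : |4 * (s * (1 - 2 * p)) * d i| ≤ 4 * μ * (1 + ((a i : ℝ) - k / n) ^ 2) := by
      rw [abs_mul]
      have f2 : |d i| ≤ 1 + ((a i : ℝ) - k / n) ^ 2 := by
        have e1 := sq_nonneg (|d i| - 1)
        rw [sub_sq, sq_abs] at e1
        linarith [sq_nonneg (d i)]
      gcongr
    have hmid : 6 * s * d i ^ 2 ≤ 6 * μ * ((a i : ℝ) - k / n) ^ 2 := by gcongr
    have hmid0 : 0 ≤ 6 * s * d i ^ 2 := by positivity
    have hd4 : 0 ≤ d i ^ 4 := by positivity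
    have : |d i ^ 4 + 6 * s * d i ^ 2 + 4 * (s * (1 - 2 * p)) * d i + (c - 3 * μ ^ 2)| ≤
        ((a i : ℝ) - k / n) ^ 4 + 10 * μ * ((a i : ℝ) - k / n) ^ 2 +
          (4 * μ + (μ + 6 * μ * (k * p) + 6 * μ ^ 2 * p)) := by
      have g1 := abs_le.1 hlin
      have g2 := abs_le.1 hc1
      rw [abs_le]
      constructor <;> linarith [g1.1, g1.2, g2.1, g2.2]
    calc _ ≤ (a i : ℝ) * _ := mul_le_mul_of_nonneg_left this (Nat.cast_nonneg _)
      _ = _ := by ring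
  rw [hdiff, abs_div, abs_of_pos hμ4, div_le_div_iff₀ hμ4 (by linarith)]
  have hsum : |∑ i, (a i : ℝ) * (d i ^ 4 + 6 * s * d i ^ 2 + 4 * (s * (1 - 2 * p)) * d i +
        (c - 3 * μ ^ 2))| ≤ 54 * K ^ 3 * μ ^ 3 := by
    refine (Finset.abs_sum_le_sum_abs _ _).trans ?_
    refine (Finset.sum_le_sum fun i _ => hterm i).trans ?_
    rw [Finset.sum_add_distrib, Finset.sum_add_distrib, ← Finset.mul_sum, ← Finset.mul_sum, h.sumR]
    have g4 := h.sum_mul_four_le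
    have g2 := h.sum_mul_sq_le
    have gk := h.le_sq
    have gk2 : (k : ℝ) * (k * p) ≤ K ^ 2 * μ ^ 2 := by
      have := (div_le_iff₀ (by linarith)).2 h.sq_le
      rw [div_eq_mul_inv] at this
      nlinarith
    have t1 : μ * ∑ i, (a i : ℝ) * ((a i : ℝ) - k / n) ^ 2 ≤ μ * (3 * K ^ 2 * μ ^ 2) := by gcongr
    have t2 : μ * k ≤ μ * (K * μ ^ 2) := by gcongr
    have t3 : μ * (k * (k * p)) ≤ μ * (K ^ 2 * μ ^ 2) := by gcongr
    have t4 : μ ^ 2 * (k * p) ≤ μ ^ 2 * (K * μ) := by gcongr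
    have hμ3 : 0 ≤ μ ^ 3 := by positivity
    have k1 : K * μ ^ 3 ≤ K ^ 3 * μ ^ 3 := by
      gcongr; exact le_self_pow₀ hK (by norm_num)
    have k2 : K ^ 2 * μ ^ 3 ≤ K ^ 3 * μ ^ 3 := by
      gcongr; norm_num
    nlinarith
  calc _ ≤ 54 * K ^ 3 * μ ^ 3 * μ := by gcongr
    _ = _ := by ring

/-- The squared increment of the quartic, around a point split as `w + (d - p)` with `w` the centred
content of the bin. -/
theorem quartic_inc_le (w d p : ℝ) (hp0 : 0 ≤ p) (hp1 : p ≤ 1) :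
    ((w + (d - p) + 1) ^ 4 - (w + (d - p)) ^ 4) ^ 2 ≤ 278800 * (1 + w ^ 6 + d ^ 6) := by
  have h1 : ∀ x : ℝ, ((x + 1) ^ 4 - x ^ 4) ^ 2 ≤ 272 * (1 + x ^ 6) := by
    intro x
    have e : ((x + 1) ^ 4 - x ^ 4) ^ 2 = (4 * x ^ 3 + 6 * x ^ 2 + 4 * x + 1) ^ 2 := by ring
    have c1 : (4 * x ^ 3 + 6 * x ^ 2 + 4 * x + 1) ^ 2 ≤
        4 * (16 * x ^ 6 + 36 * x ^ 4 + 16 * x ^ 2 + 1) := by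
      nlinarith [sq_nonneg (4 * x ^ 3 - 6 * x ^ 2), sq_nonneg (4 * x ^ 3 - 4 * x),
        sq_nonneg (4 * x ^ 3 - 1), sq_nonneg (6 * x ^ 2 - 4 * x), sq_nonneg (6 * x ^ 2 - 1),
        sq_nonneg (4 * x - 1)]
    have key : ∀ t : ℝ, 0 ≤ t → t ≤ 1 + t ^ 3 ∧ t ^ 2 ≤ 1 + t ^ 3 := by
      intro t ht
      rcases le_total t 1 with h | h
      · constructor <;> nlinarith [pow_nonneg ht 3]
      · have := le_self_pow₀ h (n := 3) (by norm_num)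
        have := pow_le_pow_right₀ h (show 2 ≤ 3 by norm_num)
        constructor <;> linarith
    have h2 := (key (x ^ 2) (sq_nonneg _)).1
    have h4 := (key (x ^ 2) (sq_nonneg _)).2
    rw [← pow_mul] at h2 h4
    rw [← pow_mul] at h4
    norm_num at h2 h4
    have h6 : 0 ≤ x ^ 6 := by positivity
    linarith
  have h6 : ∀ x y : ℝ, (x + y) ^ 6 ≤ 32 * (x ^ 6 + y ^ 6) := by
    intro x y
    have := Even.add_pow_le (n := 6) (a := x) (b := y) (by decide)
    norm_num at this
    exact this
  have g1 := h1 (w + (d - p))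
  have g2 := h6 w (d - p)
  have g3 := h6 d (-p)
  have g4 : (-p) ^ 6 ≤ 1 := by
    have : (-p) ^ 6 = p ^ 6 := by ring
    rw [this]
    exact pow_le_one₀ hp0 hp1
  rw [← sub_eq_add_neg] at g3
  have hw : 0 ≤ w ^ 6 := by positivity
  have hd : 0 ≤ d ^ 6 := by positivity
  linarith

theorem var_bound {n : ℕ} {a : Fin n → ℕ} {k : ℕ} {μ K : ℝ} (h : Bounds n a k μ K) (M : ℕ)
    (hM : M * (n : ℝ)⁻¹ ≤ μ) (d : Fin n → ℝ)
    (hd : ∀ i, |d i| ≤ |(a i : ℝ) - k / n|) (T : (Fin n → ℕ) → ℝ)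
    (hT : T = fun y => ∑ i, (a i : ℝ) * (μ⁻¹ * ((y i : ℝ) + (d i - M * (n : ℝ)⁻¹))) ^ 4) :
    step^[M] (fun y => T y ^ 2) 0 - (step^[M] T 0) ^ 2 ≤ 80000000 * K ^ 5 / μ ^ 2 := by
  have hK := h.one_le_K
  have hμ := h.one_le
  have hn : (1 : ℝ) ≤ n := by exact_mod_cast h.pos
  cases M with
  | zero => simp; positivity
  | succ M =>
  set p := (n : ℝ)⁻¹ with hp
  have hp0 : 0 ≤ p := by positivity
  have hp1 : p ≤ 1 := inv_le_one_of_one_le₀ hn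
  have hM1 : M * p ≤ μ := by push_cast at hM; nlinarith
  refine (var_le M T 0).trans ?_
  -- only the bin receiving the ball changes
  have hinc : ∀ y, sqInc T y ≤ ∑ i, (p * (a i : ℝ) ^ 2 * μ⁻¹ ^ 8 * 278800) *
      (((y i : ℝ) + (0 - M * p)) ^ 6 + (1 + d i ^ 6)) := by
    intro y
    unfold sqInc
    rw [div_eq_mul_inv, ← hp, Finset.sum_mul]
    refine Finset.sum_le_sum fun i _ => ?_
    have hone : T (y + Pi.single i 1) - T y = a i * μ⁻¹ ^ 4 *
        (((y i : ℝ) + (0 - M * p) + (d i - p) + 1) ^ 4 -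
          ((y i : ℝ) + (0 - M * p) + (d i - p)) ^ 4) := by
      rw [hT]
      beta_reduce
      rw [← Finset.sum_sub_distrib, Finset.sum_eq_single i]
      · simp only [Pi.add_apply, Pi.single_eq_same]
        push_cast
        ring
      · intro j _ hj
        simp [hj]
      · simp
    rw [hone, mul_pow, mul_pow, ← pow_mul]
    have := quartic_inc_le ((y i : ℝ) + (0 - M * p)) (d i) p hp0 hp1
    calc _ ≤ (a i : ℝ) ^ 2 * μ⁻¹ ^ (4 * 2) *
          (278800 * (1 + ((y i : ℝ) + (0 - M * p)) ^ 6 + d i ^ 6)) * p := by gcongr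
      _ = _ := by ring
  have hE : step^[M] (sqInc T) 0 ≤ ∑ i, (p * (a i : ℝ) ^ 2 * μ⁻¹ ^ 8 * 278800) *
      (42 * (μ ^ 3 + ((a i : ℝ) - k / n) ^ 6)) := by
    refine (step_iter_mono M hinc 0).trans ?_
    rw [step_iter_sum]
    refine Finset.sum_le_sum fun i _ => ?_
    rw [step_iter_mul, step_iter_add, step_iter_const h.pos]
    have := step_iter_single h.pos M i (fun x => x ^ 6) 0
    rw [← hp] at this
    rw [this]
    have h6 := six_le hp0 hp1 M hμ hM1
    have hd6 : d i ^ 6 ≤ ((a i : ℝ) - k / n) ^ 6 := by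
      have hsq : d i ^ 2 ≤ ((a i : ℝ) - k / n) ^ 2 := sq_le_sq.2 (hd i)
      have := pow_le_pow_left₀ (sq_nonneg _) hsq 3
      rw [← pow_mul, ← pow_mul] at this
      exact this
    have h3 : 1 ≤ μ ^ 3 := one_le_pow₀ hμ
    have h0 : 0 ≤ ((a i : ℝ) - k / n) ^ 6 := by positivity
    gcongr
    linarith
  have hsum : ∑ i, (p * (a i : ℝ) ^ 2 * μ⁻¹ ^ 8 * 278800) *
      (42 * (μ ^ 3 + ((a i : ℝ) - k / n) ^ 6)) = p * μ⁻¹ ^ 8 * 11709600 *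
      (μ ^ 3 * ∑ i, (a i : ℝ) ^ 2 + ∑ i, (a i : ℝ) ^ 2 * ((a i : ℝ) - k / n) ^ 6) := by
    rw [Finset.mul_sum, ← Finset.sum_add_distrib, Finset.mul_sum]
    refine Finset.sum_congr rfl fun i _ => ?_
    ring
  have hS : μ ^ 3 * ∑ i, (a i : ℝ) ^ 2 + ∑ i, (a i : ℝ) ^ 2 * ((a i : ℝ) - k / n) ^ 6 ≤
      6 * K ^ 5 * μ ^ 5 := by
    have t1 : μ ^ 3 * ∑ i, (a i : ℝ) ^ 2 ≤ μ ^ 3 * (2 * K ^ 2 * μ ^ 2) := by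
      gcongr; exact h.sum_sq_le
    have t2 := h.sum_sq_mul_six_le
    have t3 : K ^ 2 * μ ^ 5 ≤ K ^ 5 * μ ^ 5 := by gcongr; norm_num
    nlinarith
  have hMp : ((M : ℝ) + 1) * p ≤ μ := by exact_mod_cast hM
  calc ((M : ℝ) + 1) * step^[M] (sqInc T) 0
      ≤ ((M : ℝ) + 1) * (p * μ⁻¹ ^ 8 * 11709600 * (6 * K ^ 5 * μ ^ 5)) := by
        rw [hsum] at hE
        gcongr
        exact hE.trans (by gcongr)
    _ = (((M : ℝ) + 1) * p) * (μ⁻¹ ^ 8 * 11709600 * (6 * K ^ 5 * μ ^ 5)) := by ring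
    _ ≤ μ * (μ⁻¹ ^ 8 * 11709600 * (6 * K ^ 5 * μ ^ 5)) := by gcongr
    _ = 70257600 * (K ^ 5 / μ ^ 2) := by field_simp; ring
    _ ≤ 80000000 * (K ^ 5 / μ ^ 2) := by gcongr; norm_num
    _ = _ := by ring

/-! ### Reduction of the three regimes to common bounds -/

theorem sum_dev_eq {n : ℕ} (hn : 0 < n) (a : Fin n → ℕ) (k : ℕ) (hk : ∑ i, a i = k) :
    ∑ i, ((a i : ℝ) - k / n) ^ 2 = n * plantV n a := by
  have hn' : (n : ℝ) ≠ 0 := by positivity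
  have hk' : ∑ i, (a i : ℝ) = k := by exact_mod_cast hk
  unfold plantV
  simp only [sub_sq, Finset.sum_add_distrib, Finset.sum_sub_distrib, Finset.sum_const,
    Finset.card_univ, Fintype.card_fin, nsmul_eq_mul, ← Finset.sum_mul, ← Finset.mul_sum, hk']
  field_simp
  ring

/-- A sparse integer planting cannot be flat, since `∑ a i ^ 2 ≥ ∑ a i`. -/
theorem le_plantV {n : ℕ} (hn : 0 < n) (a : Fin n → ℕ) (k : ℕ) (hk : ∑ i, a i = k)
    (h : 2 * k ≤ n) : (k : ℝ) ≤ 2 * (n * plantV n a) := by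
  have hn' : (0 : ℝ) < n := by positivity
  have hk' : ∑ i, (a i : ℝ) = k := by exact_mod_cast hk
  have h1 : (k : ℝ) ≤ ∑ i, (a i : ℝ) ^ 2 := by
    rw [← hk']
    refine Finset.sum_le_sum fun i _ => ?_
    exact_mod_cast Nat.le_self_pow (by norm_num) (a i)
  have h2 : 2 * (k : ℝ) ≤ n := by exact_mod_cast h
  have e : n * plantV n a = ∑ i, (a i : ℝ) ^ 2 - (k : ℝ) * (k / n) := by
    unfold plantV
    rw [hk']
    field_simp
  have h3 : (k : ℝ) / n ≤ 1 / 2 := by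
    rw [div_le_iff₀ hn']; linarith
  have h4 : (k : ℝ) * (k / n) ≤ k * (1 / 2) := by gcongr
  linarith

theorem bounds_of {n : ℕ} (hn : 0 < n) (a : Fin n → ℕ) (k : ℕ) (hk : ∑ i, a i = k) {μ C : ℝ}
    (hC : 1 ≤ C) (hμ : 1 ≤ μ) (h1 : (k : ℝ) / Real.sqrt n ≤ C * μ)
    (h2 : n * plantV n a ≤ C * μ) : Bounds n a k μ (2 * C ^ 2) := by
  have hn' : (0 : ℝ) < n := by positivity
  have hr : 0 < Real.sqrt n := Real.sqrt_pos.2 hn'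
  have hr2 : Real.sqrt n * Real.sqrt n = n := Real.mul_self_sqrt hn'.le
  have hCC : C ≤ 2 * C ^ 2 := by nlinarith
  have h1' := (div_le_iff₀ hr).1 h1
  refine ⟨hn, hk, hC.trans hCC, hμ, ?_, ?_, ?_⟩
  · rw [sum_dev_eq hn a k hk]
    exact h2.trans (by gcongr)
  · calc (k : ℝ) ^ 2 ≤ (C * μ * Real.sqrt n) ^ 2 := by gcongr
      _ = C ^ 2 * μ ^ 2 * n := by rw [mul_pow, Real.sq_sqrt hn'.le]; ring
      _ ≤ _ := by gcongr
  · rcases le_total (2 * k) n with hs | hs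
    · have := le_plantV hn a k hk hs
      calc (k : ℝ) ≤ 2 * (C * μ) := by linarith
        _ ≤ 2 * (C ^ 2 * μ ^ 2) := by
          have e1 : C ≤ C ^ 2 := le_self_pow₀ hC (by norm_num)
          have e2 : μ ≤ μ ^ 2 := le_self_pow₀ hμ (by norm_num)
          gcongr
        _ = _ := by ring
    · have hs' : (n : ℝ) ≤ 2 * k := by exact_mod_cast hs
      have e : Real.sqrt n ≤ 2 * (C * μ) := by
        refine le_of_mul_le_mul_right ?_ hr
        linarith
      calc (k : ℝ) ≤ C * μ * Real.sqrt n := h1'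
        _ ≤ C * μ * (2 * (C * μ)) := by gcongr
        _ = _ := by ring

theorem regime_flat (A : (n : ℕ) → Fin n → ℕ) (m k : ℕ → ℕ)
    (hk : Tendsto (fun n : ℕ => (k n : ℝ) / Real.sqrt n) atTop atTop) (lam c : ℝ) (hc : 0 < c)
    (hreg : IntermediateRegime A m k lam c) :
    ∃ C : ℝ, 1 ≤ C ∧ ∀ᶠ n in atTop, (k n : ℝ) / Real.sqrt n ≤ C * ((m n : ℝ) / n) ∧
      n * plantV n (A n) ≤ C * ((m n : ℝ) / n) := by
  obtain ⟨hV, hm⟩ := hreg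
  set L := |lam| + 1 with hL
  have hL1 : 1 ≤ L := by have := abs_nonneg lam; linarith
  refine ⟨1 + L * (2 / c), by have : 0 ≤ L * (2 / c) := by positivity
                              linarith, ?_⟩
  have hVe := hV.eventually (gt_mem_nhds (show lam < L by linarith [le_abs_self lam]))
  have hme := hm.eventually (lt_mem_nhds (show c / 2 < c by linarith))
  filter_upwards [hVe, hme, hk.eventually_gt_atTop 0, eventually_gt_atTop 0] with n h1 h2 h3 h4
  have hn : (0 : ℝ) < n := by exact_mod_cast h4
  have hr : 0 < Real.sqrt n := Real.sqrt_pos.2 hn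
  have hr2 : Real.sqrt n * Real.sqrt n = n := Real.mul_self_sqrt hn.le
  have hkp : (0 : ℝ) < k n := by
    rcases div_pos_iff.1 h3 with h | h
    · exact h.1
    · linarith [h.2]
  have hpow : (n : ℝ) ^ ((3 : ℝ) / 2) = n * Real.sqrt n := by
    rw [Real.sqrt_eq_rpow, show (3 : ℝ) / 2 = 1 + 1 / 2 by norm_num, Real.rpow_add hn,
      Real.rpow_one]
  rw [hpow, div_lt_iff₀ hkp] at h1
  rw [lt_div_iff₀ (by positivity)] at h2
  have hμ0 : 0 ≤ (m n : ℝ) / n := by positivity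
  have hA : (k n : ℝ) / Real.sqrt n ≤ 2 / c * ((m n : ℝ) / n) := by
    rw [div_le_iff₀ hr, ← sub_nonneg]
    have : 2 / c * ((m n : ℝ) / n) * Real.sqrt n - k n =
        2 / (c * n) * Real.sqrt n * (m n - c / 2 * (k n * Real.sqrt n)) := by
      field_simp
      linear_combination c * (k n : ℝ) * hr2
    rw [this]
    have : 0 ≤ m n - c / 2 * (k n * Real.sqrt n) := by linarith
    positivity
  have hB : n * plantV n (A n) ≤ L * ((k n : ℝ) / Real.sqrt n) := by
    rw [← mul_div_assoc, le_div_iff₀ hr]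
    linarith
  have hc2 : 0 < 2 / c := by positivity
  constructor
  · calc _ ≤ 2 / c * ((m n : ℝ) / n) := hA
      _ ≤ _ := by gcongr; nlinarith
  · calc _ ≤ L * (2 / c * ((m n : ℝ) / n)) := hB.trans (by gcongr)
      _ ≤ _ := by rw [← mul_assoc]; gcongr; linarith

theorem regime_hilly (A : (n : ℕ) → Fin n → ℕ) (m k : ℕ → ℕ)
    (hk : Tendsto (fun n : ℕ => (k n : ℝ) / Real.sqrt n) atTop atTop) (c : ℝ) (hc : 0 < c)
    (hreg : HillyRegime A m k c) :
    ∃ C : ℝ, 1 ≤ C ∧ ∀ᶠ n in atTop, (k n : ℝ) / Real.sqrt n ≤ C * ((m n : ℝ) / n) ∧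
      n * plantV n (A n) ≤ C * ((m n : ℝ) / n) := by
  obtain ⟨hV, hm⟩ := hreg
  refine ⟨1 + 2 / c, by have : 0 ≤ 2 / c := by positivity
                        linarith, ?_⟩
  have hme := hm.eventually (lt_mem_nhds (show c / 2 < c by linarith))
  filter_upwards [hV.eventually_ge_atTop 1, hme, hk.eventually_gt_atTop 0,
    eventually_gt_atTop 0] with n h1 h2 h3 h4
  have hn : (0 : ℝ) < n := by exact_mod_cast h4
  have hr : 0 < Real.sqrt n := Real.sqrt_pos.2 hn
  have hkp : (0 : ℝ) < k n := by
    rcases div_pos_iff.1 h3 with h | h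
    · exact h.1
    · linarith [h.2]
  have hpow : (n : ℝ) ^ ((3 : ℝ) / 2) = n * Real.sqrt n := by
    rw [Real.sqrt_eq_rpow, show (3 : ℝ) / 2 = 1 + 1 / 2 by norm_num, Real.rpow_add hn,
      Real.rpow_one]
  rw [hpow, le_div_iff₀ hkp, one_mul] at h1
  have hVp : 0 < plantV n (A n) := by
    by_contra hneg
    have := mul_nonpos_of_nonneg_of_nonpos (by positivity : 0 ≤ (n : ℝ) * Real.sqrt n)
      (not_lt.1 hneg)
    linarith
  rw [lt_div_iff₀ (by positivity)] at h2
  have hμ0 : 0 ≤ (m n : ℝ) / n := by positivity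
  have hA : n * plantV n (A n) ≤ (1 + 2 / c) * ((m n : ℝ) / n) := by
    calc n * plantV n (A n) = 2 / c * (c / 2 * (plantV n (A n) * (n : ℝ) ^ 2) / n) := by
          field_simp
      _ ≤ 2 / c * ((m n : ℝ) / n) := by gcongr
      _ ≤ _ := by gcongr; linarith
  refine ⟨?_, hA⟩
  refine le_trans ?_ hA
  rw [div_le_iff₀ hr]
  linarith

theorem regime_bounds (A : (n : ℕ) → Fin n → ℕ) (m k : ℕ → ℕ)
    (hka : ∀ n, ∑ i, A n i = k n)
    (hk : Tendsto (fun n : ℕ => (k n : ℝ) / Real.sqrt n) atTop atTop)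
    (hreg : SomeRegime A m k) :
    Tendsto (fun n : ℕ => (m n : ℝ) / n) atTop atTop ∧
      ∃ K : ℝ, ∀ᶠ n in atTop, Bounds n (A n) (k n) ((m n : ℝ) / n) K := by
  obtain ⟨C, hC, hev⟩ : ∃ C : ℝ, 1 ≤ C ∧ ∀ᶠ n in atTop,
      (k n : ℝ) / Real.sqrt n ≤ C * ((m n : ℝ) / n) ∧
      n * plantV n (A n) ≤ C * ((m n : ℝ) / n) := by
    rcases hreg with ⟨c, hc, h⟩ | ⟨lam, c, _, hc, h⟩ | ⟨c, hc, h⟩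
    · exact regime_flat A m k hk 0 c hc h
    · exact regime_flat A m k hk lam c hc h
    · exact regime_hilly A m k hk c hc h
  have hC0 : 0 < C := by linarith
  have hμ : Tendsto (fun n : ℕ => (m n : ℝ) / n) atTop atTop := by
    have h1 : Tendsto (fun n : ℕ => C * ((m n : ℝ) / n)) atTop atTop :=
      tendsto_atTop_mono' _ (hev.mono fun n h => h.1) hk
    exact (tendsto_const_mul_atTop_of_pos hC0).1 h1
  refine ⟨hμ, 2 * C ^ 2, ?_⟩
  filter_upwards [hev, hμ.eventually_ge_atTop 1, eventually_gt_atTop 0] with n h h1 h2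
  exact bounds_of h2 (A n) (k n) (hka n) hC h1 h.1 h.2

/-- Mean and variance estimates for a configuration consisting of a fixed part `b` and `M` uniform
balls, whose mean bin contents deviate from `m / n` by `d`. -/
theorem moments_bound {n m : ℕ} {a : Fin n → ℕ} {k : ℕ} {K : ℝ}
    (h : Bounds n a k ((m : ℝ) / n) K) (M : ℕ) (b : Fin n → ℕ)
    (hM : M * (n : ℝ)⁻¹ ≤ (m : ℝ) / n) (hM' : (m : ℝ) / n - k / n ≤ M * (n : ℝ)⁻¹)
    (d : Fin n → ℝ) (hd : ∀ i, |d i| ≤ |(a i : ℝ) - k / n|)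
    (hb : ∀ i, (b i : ℝ) - (m : ℝ) / n = d i - M * (n : ℝ)⁻¹)
    (p : (Fin n → ℕ) → ℝ) (hp : ∀ T, expec p T = step^[M] (fun y => T (y + b)) 0) :
    |expec p (fun z => ∑ i, (a i : ℝ) * qStat n m z i ^ 4) -
        3 * (k : ℝ) * (n : ℝ) ^ 2 / (m : ℝ) ^ 2| ≤ 54 * K ^ 3 / ((m : ℝ) / n) ∧
    0 ≤ varOf p (fun z => ∑ i, (a i : ℝ) * qStat n m z i ^ 4) ∧
    varOf p (fun z => ∑ i, (a i : ℝ) * qStat n m z i ^ 4) ≤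
      80000000 * K ^ 5 / ((m : ℝ) / n) ^ 2 := by
  have hT : (fun y : Fin n → ℕ => ∑ i, (a i : ℝ) * qStat n m (y + b) i ^ 4) = fun y =>
      ∑ i, (a i : ℝ) * (((m : ℝ) / n)⁻¹ * ((y i : ℝ) + (d i - M * (n : ℝ)⁻¹))) ^ 4 := by
    funext y
    refine Finset.sum_congr rfl fun i _ => ?_
    rw [← hb i, inv_div, qStat]
    simp only [Pi.add_apply]
    push_cast
    ring
  refine ⟨?_, ?_, ?_⟩
  · have h1 := mean_bound h M hM hM' d hd
    rw [hp, hT]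
    have e : 3 * (k : ℝ) * (n : ℝ) ^ 2 / (m : ℝ) ^ 2 = 3 * k / ((m : ℝ) / n) ^ 2 := by
      rw [div_pow, div_div_eq_mul_div]
    rw [e]
    exact h1
  · have h0 : varOf p (fun z => ∑ i, (a i : ℝ) * qStat n m z i ^ 4) = expec p _ := rfl
    rw [h0, hp, ← step_iter_const h.pos M 0 0]
    exact step_iter_mono M (fun y => sq_nonneg _) 0
  · rw [varOf_eq h.pos p M b hp]
    exact var_bound h M hM d hd _ hT

/-- in all three regimes, under both ST and PL,
`E[Σ a_i q_i⁴] = 3kn²/m² + o(1)` and `Var[Σ a_i q_i⁴] = o(1)`. -/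
theorem quartic_stat_moments (A : (n : ℕ) → Fin n → ℕ) (m k : ℕ → ℕ)
    (hka : ∀ n, ∑ i, A n i = k n) (hkm : ∀ n, k n ≤ m n)
    (hk : Tendsto (fun n : ℕ => (k n : ℝ) / Real.sqrt n) atTop atTop)
    (hreg : SomeRegime A m k) :
    Tendsto (fun n : ℕ => expec (stProb n (m n))
        (fun z => ∑ i, (A n i : ℝ) * qStat n (m n) z i ^ 4) -
        3 * (k n : ℝ) * (n : ℝ) ^ 2 / (m n : ℝ) ^ 2) atTop (𝓝 0) ∧
    Tendsto (fun n : ℕ => varOf (stProb n (m n))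
        (fun z => ∑ i, (A n i : ℝ) * qStat n (m n) z i ^ 4)) atTop (𝓝 0) ∧
    Tendsto (fun n : ℕ => expec (plProb n (m n) (A n))
        (fun z => ∑ i, (A n i : ℝ) * qStat n (m n) z i ^ 4) -
        3 * (k n : ℝ) * (n : ℝ) ^ 2 / (m n : ℝ) ^ 2) atTop (𝓝 0) ∧
    Tendsto (fun n : ℕ => varOf (plProb n (m n) (A n))
        (fun z => ∑ i, (A n i : ℝ) * qStat n (m n) z i ^ 4)) atTop (𝓝 0) := by
  obtain ⟨hμ, K, hB⟩ := regime_bounds A m k hka hk hreg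
  have lim1 : Tendsto (fun n : ℕ => 54 * K ^ 3 / ((m n : ℝ) / n)) atTop (𝓝 0) :=
    hμ.const_div_atTop _
  have lim2 : Tendsto (fun n : ℕ => 80000000 * K ^ 5 / ((m n : ℝ) / n) ^ 2) atTop (𝓝 0) :=
    ((tendsto_pow_atTop (by norm_num)).comp hμ).const_div_atTop _
  have hst := hB.mono fun n h => moments_bound h (m n) 0 (by rw [div_eq_mul_inv])
    (by rw [← div_eq_mul_inv]; have : 0 ≤ (k n : ℝ) / n := by positivity
        linarith) (fun _ => 0) (fun i => by simp)
    (fun i => by simp [div_eq_mul_inv]) (stProb n (m n))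
    (fun T => by simpa using expec_stProb h.pos (m n) T)
  have hpl := hB.mono fun n h => moments_bound h (m n - k n) (A n)
    (by rw [div_eq_mul_inv]; gcongr; exact Nat.sub_le _ _)
    (by rw [Nat.cast_sub (hkm n), div_eq_mul_inv, div_eq_mul_inv]; linarith)
    (fun i => (A n i : ℝ) - k n / n) (fun i => le_rfl)
    (fun i => by rw [Nat.cast_sub (hkm n)]; ring) (plProb n (m n) (A n))
    (fun T => by
      rw [expec_plProb (m n) (A n) (by rw [hka]; exact hkm n), hka, expec_stProb h.pos])
  refine ⟨?_, ?_, ?_, ?_⟩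
  · exact squeeze_zero_norm' (hst.mono fun n h => h.1) lim1
  · exact squeeze_zero' (hst.mono fun n h => h.2.1) (hst.mono fun n h => h.2.2) lim2
  · exact squeeze_zero_norm' (hpl.mono fun n h => h.1) lim1
  · exact squeeze_zero' (hpl.mono fun n h => h.2.1) (hpl.mono fun n h => h.2.2) lim2
end

section
/- Suppose k(n)/√n → ∞ and one of the three regimes holds: (Flat) n^{3/2}V(A)/k → 0 and m/(k n^{1/2}) → c > 0; (Intermediate) n^{3/2}V(A)/k → λ > 0 and m/(k n^{1/2}) → c > 0; or (Hilly) n^{3/2}V(A)/k → ∞ and m/(V(A)n²) → c > 0. For a configuration Z with z_i > a_i − 1 for all i, define E₁(Z) = ∏_{i=1}^n (z_i)_{a_i}/z_i^{a_i} and E₂ = m^k/(m)_k, where (x)_j is the falling factorial. Then under both ST(m,n) and PL_A(m,n), with probability tending to 1 the sampled configuration Z satisfies ln(E₁(Z)·E₂) = −V(A)n²/(2m) + kn/(2m) + 5kn²/(12m²) − k²n/(4m²) + o(1); that is, ln(E₁E₂) minus this deterministic expression converges to 0 in probability as n → ∞. -/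
/-!
Write `φ(s) = ∫₀ˢ log(1 - x) dx`. Euler–Maclaurin summation gives
`log ((z)_a / z^a) = z φ(a/z) - ½ log(1 - a/z) - a / (12 z (z - a)) + O(a / z³)`
(`log_descFactorial`), which is applied to every bin and to `(m)_k`. Expand `∑ z_i φ(a_i/z_i)`
around the common point `k/m`. Since `∑ z_i = m` and `∑ a_i = k`, the zeroth-order term is exactly
`m φ(k/m)`, which `E₂` cancels, and the first-order term vanishes. What is left is a sum of Bregman
divergences of `φ`, equal to `-½ ∑ (a_i - z_i k/m)² / z_i` up to a relative `o(1)`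
(`hfun_bregman`). With `z_i = (m/n)(1 + q_i)`, this sum and the Euler–Maclaurin corrections are
evaluated from three properties of a typical configuration: `max |q_i|` is small,
`∑ q_i² ≈ n²/m`, and `∑ (a_i - k/n) q_i = o(√n)`. The result is `expansion`, with an explicit error
bound.

These properties hold with probability tending to 1. Under the standard distribution, conditioning
on the bin of the last ball (`stE_succ`) gives the second moments of the linear statistic and of the
centred collision count, and the exponential moments of an occupancy, so Chebyshev's inequality and
a Chernoff bound apply (`stE_indicator_ge`). The planted distribution is a standard one with `m - k`
balls shifted by `A` (`probOf_plProb`), and the shift is too small to matter (`typical_of_good`).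

All three regimes enter only through the bounds `k √n = O(m)`, `n √n = O(m)` and
`∑ (a_i - k/n)² = n V(A) = O(m/n)` (`eventually_sizeBounds`). They rest on the integrality of the
`a_i`: if `k ≤ n/2`, then `V(A) ≥ k/(2n)`.
-/

open Finset Filter Topology

/-- `ln(E₁(Z)·E₂)` where `E₁(Z) = ∏_i (z_i)_{a_i}/z_i^{a_i}` and
`E₂ = m^k/(m)_k`, with `(x)_j` the falling factorial and `k = Σ_i a_i`. -/
noncomputable def logE1E2 (n m : ℕ) (a z : Fin n → ℕ) : ℝ :=
  Real.log ((∏ i, (Nat.descFactorial (z i) (a i) : ℝ) / (z i : ℝ) ^ (a i)) *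
    ((m : ℝ) ^ (∑ i, a i) / (Nat.descFactorial m (∑ i, a i) : ℝ)))

/-- The deterministic expression `−V(A)n²/(2m) + kn/(2m) + 5kn²/(12m²) − k²n/(4m²)`. -/
noncomputable def errExpr (n m : ℕ) (a : Fin n → ℕ) : ℝ :=
  -(plantV n a * (n : ℝ) ^ 2 / (2 * m)) + (∑ i, (a i : ℝ)) * n / (2 * m) +
    5 * (∑ i, (a i : ℝ)) * (n : ℝ) ^ 2 / (12 * (m : ℝ) ^ 2) -
    (∑ i, (a i : ℝ)) ^ 2 * n / (4 * (m : ℝ) ^ 2)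

/-! ### Expectations under the standard distribution -/

lemma expec_stProb_eq_sum (n m : ℕ) (F : (Fin n → ℕ) → ℝ) :
    expec (stProb n m) F = ∑ z ∈ piAntidiag univ m, stProb n m z * F z := by
  unfold expec
  refine tsum_eq_sum fun z hz => ?_
  have : ¬ ∑ i, z i = m := by simpa [mem_piAntidiag] using hz
  simp [stProb, this]

lemma stProb_nonneg (n m : ℕ) (z : Fin n → ℕ) : 0 ≤ stProb n m z := by
  unfold stProb
  split_ifs <;> positivity

lemma stE_add (n m : ℕ) (F G : (Fin n → ℕ) → ℝ) :
    expec (stProb n m) (fun z => F z + G z) = expec (stProb n m) F + expec (stProb n m) G := by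
  simp only [expec_stProb_eq_sum, mul_add, sum_add_distrib]

lemma stE_mul_left (n m : ℕ) (c : ℝ) (F : (Fin n → ℕ) → ℝ) :
    expec (stProb n m) (fun z => c * F z) = c * expec (stProb n m) F := by
  simp only [expec_stProb_eq_sum, mul_sum]
  exact sum_congr rfl fun z _ => by ring

lemma stE_sum (n m : ℕ) {ι : Type*} (s : Finset ι) (F : ι → (Fin n → ℕ) → ℝ) :
    expec (stProb n m) (fun z => ∑ i ∈ s, F i z) = ∑ i ∈ s, expec (stProb n m) (F i) := by
  simp only [expec_stProb_eq_sum, mul_sum]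
  exact sum_comm

lemma stE_mono (n m : ℕ) (F G : (Fin n → ℕ) → ℝ)
    (h : ∀ z, ∑ i, z i = m → F z ≤ G z) :
    expec (stProb n m) F ≤ expec (stProb n m) G := by
  simp only [expec_stProb_eq_sum]
  refine sum_le_sum fun z hz => mul_le_mul_of_nonneg_left (h z ?_) (stProb_nonneg n m z)
  simpa [mem_piAntidiag] using hz

lemma stE_congr (n m : ℕ) (F G : (Fin n → ℕ) → ℝ)
    (h : ∀ z, ∑ i, z i = m → F z = G z) :
    expec (stProb n m) F = expec (stProb n m) G :=
  le_antisymm (stE_mono n m F G fun z hz => (h z hz).le)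
    (stE_mono n m G F fun z hz => (h z hz).ge)

lemma stE_zero (n : ℕ) (F : (Fin n → ℕ) → ℝ) : expec (stProb n 0) F = F 0 := by
  rw [expec_stProb_eq_sum, piAntidiag_zero, sum_singleton]
  simp [stProb]

/-- Size-biasing a multinomial vector at bin `i` amounts to adding one ball to bin `i`. -/
lemma stProb_shift (n m : ℕ) (i : Fin n) (z : Fin n → ℕ) :
    ((z + Pi.single i 1 : Fin n → ℕ) i : ℝ) * stProb n (m + 1) (z + Pi.single i 1) =
      (m + 1) * (n : ℝ)⁻¹ * stProb n m z := by
  have hsum : ∑ j, (z + Pi.single i 1 : Fin n → ℕ) j = ∑ j, z j + 1 := by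
    simp [sum_add_distrib]
  unfold stProb
  rw [hsum]
  by_cases h : ∑ j, z j = m
  · have hp : ∏ j, (Nat.factorial ((z + Pi.single i 1 : Fin n → ℕ) j) : ℝ) =
        ((z i : ℝ) + 1) * ∏ j, (Nat.factorial (z j) : ℝ) := by
      rw [← mul_prod_erase univ _ (mem_univ i),
        ← mul_prod_erase univ (fun j => (Nat.factorial (z j) : ℝ)) (mem_univ i)]
      have : ∏ j ∈ univ.erase i, (Nat.factorial ((z + Pi.single i 1 : Fin n → ℕ) j) : ℝ) =
          ∏ j ∈ univ.erase i, (Nat.factorial (z j) : ℝ) :=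
        prod_congr rfl fun j hj => by simp [(mem_erase.1 hj).1]
      rw [this]
      simp [Nat.factorial_succ]
      ring
    rw [if_pos (by omega), if_pos h, hp]
    have h1 : ∏ j, (Nat.factorial (z j) : ℝ) ≠ 0 :=
      prod_ne_zero_iff.2 fun j _ => by positivity
    have h2 : (z i : ℝ) + 1 ≠ 0 := by positivity
    simp only [Pi.add_apply, Pi.single_eq_same, Nat.factorial_succ]
    push_cast
    rw [pow_succ]
    field_simp
  · rw [if_neg (by omega), if_neg h]
    simp

/-- Conditioning on the bin of the last ball: the basic recursion from which all moments follow. -/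
lemma stE_succ (n m : ℕ) (F : (Fin n → ℕ) → ℝ) :
    expec (stProb n (m + 1)) F =
      (n : ℝ)⁻¹ * expec (stProb n m) (fun z => ∑ i, F (z + Pi.single i 1)) := by
  have key : ∀ i : Fin n, ∑' z : Fin n → ℕ, (z i : ℝ) * stProb n (m + 1) z * F z =
      (m + 1) * (n : ℝ)⁻¹ * expec (stProb n m) (fun z => F (z + Pi.single i 1)) := by
    intro i
    have hinj : Function.Injective (fun z : Fin n → ℕ => z + Pi.single i 1) :=
      add_left_injective _
    rw [← hinj.tsum_eq]
    · unfold expec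
      rw [← tsum_mul_left]
      refine tsum_congr fun z => ?_
      rw [stProb_shift]
      ring
    · intro z hz
      have hzi : z i ≠ 0 := by
        rintro h0
        simp [h0] at hz
      refine ⟨z - Pi.single i 1, ?_⟩
      funext j
      by_cases hj : j = i
      · subst hj
        simp
        omega
      · simp [hj]
  have hm : ((m : ℝ) + 1) ≠ 0 := by positivity
  have hfin : ∀ i : Fin n, ∑' z : Fin n → ℕ, (z i : ℝ) * stProb n (m + 1) z * F z =
      expec (stProb n (m + 1)) (fun z => (z i : ℝ) * F z) := fun i =>
    tsum_congr fun z => by ring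
  have h1 : ((m : ℝ) + 1) * expec (stProb n (m + 1)) F =
      ∑ i, expec (stProb n (m + 1)) (fun z => (z i : ℝ) * F z) := by
    rw [← stE_sum, ← stE_mul_left]
    refine stE_congr _ _ _ _ fun z hz => ?_
    rw [← sum_mul]
    congr 1
    exact_mod_cast hz.symm
  rw [stE_sum]
  apply mul_left_cancel₀ hm
  rw [h1, mul_sum, mul_sum]
  refine sum_congr rfl fun i _ => ?_
  rw [← hfin, key]
  ring

lemma stE_const {n : ℕ} (hn : 0 < n) (m : ℕ) (c : ℝ) :
    expec (stProb n m) (fun _ => c) = c := by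
  induction m with
  | zero => rw [stE_zero]
  | succ m ih =>
    rw [stE_succ]
    have : (n : ℝ) ≠ 0 := by positivity
    simp only [sum_const, card_univ, Fintype.card_fin, nsmul_eq_mul]
    rw [stE_mul_left, ih]
    field_simp

/-! ### Second moments and exponential moments -/

lemma sum_add_single {n : ℕ} (b : Fin n → ℝ) (z : Fin n → ℕ) (i : Fin n) :
    ∑ j, b j * ((z + Pi.single i 1 : Fin n → ℕ) j : ℝ) = ∑ j, b j * (z j : ℝ) + b i := by
  simp [mul_add, sum_add_distrib, Pi.single_apply]

lemma sum_sq_add_single {n : ℕ} (z : Fin n → ℕ) (i : Fin n) :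
    ∑ j, ((z + Pi.single i 1 : Fin n → ℕ) j : ℝ) ^ 2 = ∑ j, (z j : ℝ) ^ 2 + (2 * z i + 1) := by
  have : ∀ j, ((z + Pi.single i 1 : Fin n → ℕ) j : ℝ) ^ 2 =
      (z j : ℝ) ^ 2 + if j = i then (2 * (z i : ℝ) + 1) else 0 := by
    intro j
    by_cases h : j = i
    · subst h
      simp
      ring
    · simp [h]
  rw [sum_congr rfl fun j _ => this j, sum_add_distrib]
  simp

lemma stE_linear_sq {n : ℕ} (hn : 0 < n) (b : Fin n → ℝ) (hb : ∑ i, b i = 0) (m : ℕ) :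
    expec (stProb n m) (fun z => (∑ i, b i * (z i : ℝ)) ^ 2) = m * (∑ i, b i ^ 2) / n := by
  have hn' : (n : ℝ) ≠ 0 := by positivity
  induction m with
  | zero => simp [stE_zero]
  | succ m ih =>
    rw [stE_succ]
    have : ∀ z : Fin n → ℕ, ∑ i, (∑ j, b j * ((z + Pi.single i 1 : Fin n → ℕ) j : ℝ)) ^ 2 =
        n * (∑ i, b i * (z i : ℝ)) ^ 2 + ∑ i, b i ^ 2 := by
      intro z
      simp only [sum_add_single, add_sq, sum_add_distrib, ← mul_sum, hb]
      simp
    simp only [this]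
    rw [stE_add, stE_mul_left, ih, stE_const hn]
    push_cast
    field_simp

lemma stE_exp {n : ℕ} (hn : 0 < n) (i : Fin n) (θ : ℝ) (m : ℕ) :
    expec (stProb n m) (fun z => Real.exp (θ * z i)) = (1 + (Real.exp θ - 1) / n) ^ m := by
  have hn' : (n : ℝ) ≠ 0 := by positivity
  induction m with
  | zero => simp [stE_zero]
  | succ m ih =>
    rw [stE_succ]
    have : ∀ z : Fin n → ℕ, ∑ j, Real.exp (θ * ((z + Pi.single j 1 : Fin n → ℕ) i : ℝ)) =
        (n + (Real.exp θ - 1)) * Real.exp (θ * z i) := by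
      intro z
      have : ∀ j, Real.exp (θ * ((z + Pi.single j 1 : Fin n → ℕ) i : ℝ)) =
          Real.exp (θ * z i) + if j = i then Real.exp (θ * z i) * (Real.exp θ - 1) else 0 := by
        intro j
        by_cases h : j = i
        · subst h
          simp [mul_add, Real.exp_add]
          ring
        · simp [h, Ne.symm h]
      rw [sum_congr rfl fun j _ => this j, sum_add_distrib]
      simp
      ring
    simp only [this]
    rw [stE_mul_left, ih, pow_succ]
    field_simp

/-- The number of ordered pairs of balls sharing a bin, minus its mean `m(m-1)/n`. As balls are
added one at a time this is a martingale. -/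
noncomputable def collM (n m : ℕ) (z : Fin n → ℕ) : ℝ :=
  ∑ i, (z i : ℝ) ^ 2 - m - m * (m - 1) / n

lemma collM_step {n : ℕ} (m : ℕ) (z : Fin n → ℕ) (i : Fin n) (hn : 0 < n) :
    collM n (m + 1) (z + Pi.single i 1) = collM n m z + 2 * (z i - (m : ℝ) / n) := by
  have hn' : (n : ℝ) ≠ 0 := by positivity
  unfold collM
  rw [sum_sq_add_single]
  push_cast
  field_simp
  ring

lemma sum_centered {n m : ℕ} (hn : 0 < n) (z : Fin n → ℕ) (hz : ∑ i, z i = m) :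
    ∑ i, ((z i : ℝ) - (m : ℝ) / n) = 0 := by
  have hn' : (n : ℝ) ≠ 0 := by positivity
  have : (∑ i, (z i : ℝ)) = m := by exact_mod_cast hz
  rw [sum_sub_distrib, this]
  simp
  field_simp
  simp

lemma sum_centered_sq {n m : ℕ} (hn : 0 < n) (z : Fin n → ℕ) (hz : ∑ i, z i = m) :
    ∑ i, ((z i : ℝ) - (m : ℝ) / n) ^ 2 = collM n m z + (m - (m : ℝ) / n) := by
  have hn' : (n : ℝ) ≠ 0 := by positivity
  have : (∑ i, (z i : ℝ)) = m := by exact_mod_cast hz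
  unfold collM
  simp only [sub_sq, sum_add_distrib, sum_sub_distrib, ← sum_mul, ← mul_sum, this]
  simp
  field_simp
  ring

lemma stE_collM {n : ℕ} (hn : 0 < n) (m : ℕ) : expec (stProb n m) (collM n m) = 0 := by
  have hn' : (n : ℝ) ≠ 0 := by positivity
  induction m with
  | zero => simp [stE_zero, collM]
  | succ m ih =>
    rw [stE_succ, stE_congr n m _ (fun z => n * collM n m z), stE_mul_left, ih]
    · simp
    intro z hz
    simp only [collM_step m z _ hn, sum_add_distrib, ← mul_sum, sum_centered hn z hz]
    simp

lemma stE_collM_sq {n : ℕ} (hn : 0 < n) (m : ℕ) :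
    expec (stProb n m) (fun z => collM n m z ^ 2) ≤ 2 * m ^ 2 / n := by
  have hn' : (0 : ℝ) < n := by positivity
  induction m with
  | zero => simp [stE_zero, collM]
  | succ m ih =>
    rw [stE_succ, stE_congr n m _
      (fun z => n * collM n m z ^ 2 + (4 * collM n m z + 4 * (m - (m : ℝ) / n))),
      stE_add, stE_mul_left, stE_add, stE_mul_left, stE_collM hn, stE_const hn]
    · have h1 : (n : ℝ)⁻¹ * (n * expec (stProb n m) (fun z => collM n m z ^ 2) +
          (4 * 0 + 4 * (m - (m : ℝ) / n))) =
          expec (stProb n m) (fun z => collM n m z ^ 2) + 4 * (m - (m : ℝ) / n) / n := by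
        field_simp
        ring
      rw [h1]
      have h2 : (0 : ℝ) ≤ (m : ℝ) / n := by positivity
      have h3 : 4 * (m - (m : ℝ) / n) / n ≤ 4 * m / n := by gcongr; linarith
      have h4 : 2 * ((m + 1 : ℕ) : ℝ) ^ 2 / n = 2 * m ^ 2 / n + 4 * m / n + 2 / n := by
        push_cast
        ring
      have h5 : (0 : ℝ) ≤ 2 / n := by positivity
      linarith
    intro z hz
    simp only [collM_step m z _ hn, add_sq, sum_add_distrib, ← mul_sum, mul_pow,
      sum_centered hn z hz, sum_centered_sq hn z hz]
    simp
    ring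

/-- The sub-Gaussian bound on the exponential moments of one occupancy, valid for `|θ| ≤ 1`. -/
lemma stE_exp_centered_le {n : ℕ} (hn : 0 < n) (i : Fin n) (θ : ℝ) (hθ : |θ| ≤ 1) (m : ℕ) :
    expec (stProb n m) (fun z => Real.exp (θ * (z i - (m : ℝ) / n))) ≤
      Real.exp ((m : ℝ) / n * θ ^ 2) := by
  have hn' : (0 : ℝ) < n := by positivity
  have h1 : (fun z : Fin n → ℕ => Real.exp (θ * (z i - (m : ℝ) / n))) =
      fun z => Real.exp (-(θ * ((m : ℝ) / n))) * Real.exp (θ * z i) := by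
    funext z
    rw [← Real.exp_add]
    congr 1
    ring
  rw [h1, stE_mul_left, stE_exp hn]
  have h2 : 1 + (Real.exp θ - 1) / n ≤ Real.exp ((Real.exp θ - 1) / n) := by
    linarith [Real.add_one_le_exp ((Real.exp θ - 1) / n)]
  have h3 : 0 ≤ 1 + (Real.exp θ - 1) / n := by
    have : (1 : ℝ) ≤ n := by exact_mod_cast hn
    have h4 : 1 + (Real.exp θ - 1) / n = (n - 1 + Real.exp θ) / n := by
      field_simp
      ring
    rw [h4]
    have := Real.exp_pos θ
    apply div_nonneg <;> linarith
  have h5 : Real.exp θ - 1 - θ ≤ θ ^ 2 :=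
    (le_abs_self _).trans (Real.abs_exp_sub_one_sub_id_le hθ)
  calc Real.exp (-(θ * ((m : ℝ) / n))) * (1 + (Real.exp θ - 1) / n) ^ m
      ≤ Real.exp (-(θ * ((m : ℝ) / n))) * Real.exp ((Real.exp θ - 1) / n) ^ m := by gcongr
    _ = Real.exp ((m : ℝ) / n * (Real.exp θ - 1 - θ)) := by
        rw [← Real.exp_nat_mul, ← Real.exp_add]
        congr 1
        ring
    _ ≤ _ := by gcongr

/-! ### Concentration for the standard distribution -/

/-- The typical behaviour of `M` balls thrown uniformly at random into `n` bins, at scale `μ`: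
no occupancy is far from the mean, the collision count is concentrated, and the linear statistic
with weights `b` is small. -/
def GoodEvent (n M : ℕ) (μ η : ℝ) (b : Fin n → ℝ) (y : Fin n → ℕ) : Prop :=
  (∀ i, |(y i : ℝ) - (M : ℝ) / n| ≤ η * μ) ∧ |collM n M y| ≤ η * (μ * n) ∧
    |∑ i, b i * (y i : ℝ)| ≤ η * (μ * Real.sqrt n)

lemma one_le_div_sq {x c : ℝ} (hc : 0 < c) (h : c < |x|) : 1 ≤ x ^ 2 / c ^ 2 := by
  rw [one_le_div (by positivity), ← sq_abs x]
  gcongr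

/-- The failure probability of the good event, by Chebyshev's inequality for the two quadratic
conditions and a Chernoff bound for the maximum. -/
noncomputable def failBound (C η n μ : ℝ) : ℝ :=
  2 * n * Real.exp (-(η ^ 2 * μ / 4)) + 2 / (n * η ^ 2) + C / (n * η ^ 2)

/-- An event containing the good event has probability at least `1 - failBound`. The indicator of
the bad event is dominated by the sum `G` of the exponential and quadratic functions that appear in
the Chernoff and Chebyshev inequalities, and the expectation of `G` is bounded termwise. -/
lemma stE_indicator_ge {n M : ℕ} (hn : 0 < n) {μ η C : ℝ} (hη : 0 < η) (hη1 : η ≤ 1)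
    (hμ : 0 < μ) (hM : (M : ℝ) / n ≤ μ) (b : Fin n → ℝ) (hb : ∑ i, b i = 0)
    (hB : ∑ i, b i ^ 2 ≤ C * μ) (S : Set (Fin n → ℕ))
    (hS : ∀ y, ∑ i, y i = M → GoodEvent n M μ η b y → y ∈ S) :
    1 - failBound C η n μ ≤ expec (stProb n M) (S.indicator 1) := by
  have hn' : (0 : ℝ) < n := by positivity
  have hM0 : (0 : ℝ) ≤ (M : ℝ) / n := by positivity
  set G : (Fin n → ℕ) → ℝ := fun y =>
    (∑ i, (Real.exp (-(η / 2 * (η * μ))) * Real.exp (η / 2 * (y i - (M : ℝ) / n)) +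
      Real.exp (-(η / 2 * (η * μ))) * Real.exp (-(η / 2) * (y i - (M : ℝ) / n)))) +
    (((η * (μ * n)) ^ 2)⁻¹ * collM n M y ^ 2 +
     ((η * (μ * Real.sqrt n)) ^ 2)⁻¹ * (∑ i, b i * (y i : ℝ)) ^ 2) with hG
  have hG0 : ∀ y, 0 ≤ G y := fun y => by
    simp only [hG]
    positivity
  have hpt : ∀ y, ∑ i, y i = M → (1 : ℝ) ≤ S.indicator 1 y + G y := by
    intro y hy
    by_cases hyS : y ∈ S
    · simp only [Set.indicator_of_mem hyS, Pi.one_apply]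
      linarith [hG0 y]
    have hbad : ¬ GoodEvent n M μ η b y := fun h => hyS (hS y hy h)
    rw [Set.indicator_of_notMem hyS, zero_add]
    unfold GoodEvent at hbad
    have t1 : 0 ≤ (∑ i, (Real.exp (-(η / 2 * (η * μ))) * Real.exp (η / 2 * (y i - (M : ℝ) / n)) +
      Real.exp (-(η / 2 * (η * μ))) * Real.exp (-(η / 2) * (y i - (M : ℝ) / n)))) := by
      positivity
    have t2 : 0 ≤ ((η * (μ * n)) ^ 2)⁻¹ * collM n M y ^ 2 := by positivity
    have t3 : 0 ≤ ((η * (μ * Real.sqrt n)) ^ 2)⁻¹ * (∑ i, b i * (y i : ℝ)) ^ 2 := by positivity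
    by_cases h2 : |collM n M y| ≤ η * (μ * n)
    · by_cases h3 : |∑ i, b i * (y i : ℝ)| ≤ η * (μ * Real.sqrt n)
      · have h1 : ∃ i, η * μ < |(y i : ℝ) - (M : ℝ) / n| := by
          by_contra! h
          exact hbad ⟨h, h2, h3⟩
        obtain ⟨i, hi⟩ := h1
        have hle : 1 ≤ Real.exp (-(η / 2 * (η * μ))) * Real.exp (η / 2 * (y i - (M : ℝ) / n)) +
            Real.exp (-(η / 2 * (η * μ))) * Real.exp (-(η / 2) * (y i - (M : ℝ) / n)) := by
          rw [← Real.exp_add, ← Real.exp_add]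
          rcases lt_abs.1 hi with h | h
          · have : 1 ≤ Real.exp (-(η / 2 * (η * μ)) + η / 2 * (y i - (M : ℝ) / n)) := by
              apply Real.one_le_exp
              nlinarith
            linarith [Real.exp_pos (-(η / 2 * (η * μ)) + -(η / 2) * (y i - (M : ℝ) / n))]
          · have : 1 ≤ Real.exp (-(η / 2 * (η * μ)) + -(η / 2) * (y i - (M : ℝ) / n)) := by
              apply Real.one_le_exp
              nlinarith
            linarith [Real.exp_pos (-(η / 2 * (η * μ)) + η / 2 * (y i - (M : ℝ) / n))]
        have := single_le_sum (f := fun i =>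
          (Real.exp (-(η / 2 * (η * μ))) * Real.exp (η / 2 * (y i - (M : ℝ) / n)) +
            Real.exp (-(η / 2 * (η * μ))) * Real.exp (-(η / 2) * (y i - (M : ℝ) / n))))
          (fun i _ => by positivity) (mem_univ i)
        simp only [hG]
        linarith
      · have := one_le_div_sq (by positivity) (not_le.1 h3)
        rw [div_eq_inv_mul] at this
        simp only [hG]
        linarith
    · have := one_le_div_sq (by positivity) (not_le.1 h2)
      rw [div_eq_inv_mul] at this
      simp only [hG]
      linarith
  have hE := stE_mono n M (fun _ => 1) (fun y => S.indicator 1 y + G y) hpt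
  rw [stE_const hn, stE_add] at hE
  have hEG : expec (stProb n M) G ≤ failBound C η n μ := by
    simp only [hG]
    rw [stE_add, stE_sum, stE_add, stE_mul_left, stE_mul_left, stE_linear_sq hn b hb]
    unfold failBound
    have e1 : ∀ i : Fin n, expec (stProb n M) (fun y =>
        Real.exp (-(η / 2 * (η * μ))) * Real.exp (η / 2 * (y i - (M : ℝ) / n)) +
        Real.exp (-(η / 2 * (η * μ))) * Real.exp (-(η / 2) * (y i - (M : ℝ) / n))) ≤
        2 * Real.exp (-(η ^ 2 * μ / 4)) := by
      intro i
      have hθ : |η / 2| ≤ 1 := by rw [abs_of_pos (by positivity)]; linarith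
      have hθ' : |-(η / 2)| ≤ 1 := by rwa [abs_neg]
      rw [stE_add, stE_mul_left, stE_mul_left]
      have hfin : Real.exp (-(η / 2 * (η * μ))) * Real.exp ((M : ℝ) / n * (η / 2) ^ 2) ≤
          Real.exp (-(η ^ 2 * μ / 4)) := by
        rw [← Real.exp_add]
        apply Real.exp_le_exp.2
        nlinarith [mul_le_mul_of_nonneg_right hM (sq_nonneg (η / 2))]
      have a1 := stE_exp_centered_le hn i (η / 2) hθ M
      have a2 := stE_exp_centered_le hn i (-(η / 2)) hθ' M
      rw [neg_sq] at a2
      have a3 := mul_le_mul_of_nonneg_left a1 (Real.exp_pos (-(η / 2 * (η * μ)))).le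
      have a4 := mul_le_mul_of_nonneg_left a2 (Real.exp_pos (-(η / 2 * (η * μ)))).le
      linarith
    have e1' := sum_le_sum fun i (_ : i ∈ univ) => e1 i
    rw [sum_const, card_univ, Fintype.card_fin, nsmul_eq_mul] at e1'
    have hMn : (M : ℝ) ≤ μ * n := by rwa [div_le_iff₀ hn'] at hM
    have e2 : ((η * (μ * n)) ^ 2)⁻¹ * expec (stProb n M) (fun y => collM n M y ^ 2) ≤
        2 / (n * η ^ 2) := by
      calc _ ≤ ((η * (μ * n)) ^ 2)⁻¹ * (2 * (μ * n) ^ 2 / n) := by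
            gcongr
            refine (stE_collM_sq hn M).trans ?_
            gcongr
        _ = _ := by field_simp
    have e3 : ((η * (μ * Real.sqrt n)) ^ 2)⁻¹ * (M * (∑ i, b i ^ 2) / n) ≤ C / (n * η ^ 2) := by
      calc _ ≤ ((η * (μ * Real.sqrt n)) ^ 2)⁻¹ * ((μ * n) * (C * μ) / n) := by gcongr
        _ = _ := by
          rw [mul_pow, mul_pow, Real.sq_sqrt hn'.le]
          field_simp
    linarith
  linarith

lemma stE_indicator_le_one {n M : ℕ} (hn : 0 < n) (S : Set (Fin n → ℕ)) :
    expec (stProb n M) (S.indicator 1) ≤ 1 := by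
  rw [← stE_const hn M 1]
  refine stE_mono _ _ _ _ fun z _ => ?_
  by_cases h : z ∈ S <;> simp [h]

lemma probOf_stProb (n m : ℕ) (S : Set (Fin n → ℕ)) :
    probOf (stProb n m) S = expec (stProb n m) (S.indicator 1) := by
  unfold probOf expec
  refine tsum_congr fun z => ?_
  by_cases h : z ∈ S <;> simp [h]

/-- The planted distribution is the standard distribution of the remaining balls, shifted by the
planting. -/
lemma probOf_plProb (n m : ℕ) (a : Fin n → ℕ) (ha : ∑ i, a i ≤ m) (S : Set (Fin n → ℕ)) :
    probOf (plProb n m a) S =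
      expec (stProb n (m - ∑ i, a i)) ({y | y + a ∈ S}.indicator 1) := by
  unfold probOf expec
  have hinj : Function.Injective (fun z : Fin n → ℕ => z + a) := add_left_injective _
  rw [← hinj.tsum_eq]
  · refine tsum_congr fun y => ?_
    have h1 : plProb n m a (y + a) = stProb n (m - ∑ i, a i) y := by
      unfold plProb stProb
      have : (∑ i, (y + a) i = m ∧ ∀ i, a i ≤ (y + a) i) ↔ ∑ i, y i = m - ∑ i, a i := by
        simp only [Pi.add_apply, sum_add_distrib]
        constructor
        · rintro ⟨h, _⟩
          omega
        · intro h
          exact ⟨by omega, fun i => by omega⟩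
      simp only [this]
      simp
    by_cases h : y + a ∈ S <;> simp [h, h1]
  · intro z hz
    have hp : plProb n m a z ≠ 0 := by
      intro h0
      apply hz
      by_cases h : z ∈ S <;> simp [h, h0]
    have hle : ∀ i, a i ≤ z i := by
      by_contra hcon
      exact hp (if_neg fun h => hcon h.2)
    exact ⟨z - a, funext fun i => by simp [hle i]⟩

/-! ### Falling factorials and logarithms -/

lemma log_bound2 {x : ℝ} (h : |x| ≤ 1 / 2) : |Real.log (1 - x) + x + x ^ 2 / 2| ≤ 2 * |x| ^ 3 := by
  have h1 := Real.abs_log_sub_add_sum_range_le (x := x) (by linarith) 2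
  simp only [sum_range_succ, sum_range_zero] at h1
  norm_num at h1
  have h2 : |x| ^ 3 / (1 - |x|) ≤ 2 * |x| ^ 3 := by
    rw [div_le_iff₀ (by linarith)]
    nlinarith [pow_nonneg (abs_nonneg x) 3]
  have h3 : Real.log (1 - x) + x + x ^ 2 / 2 = x + x ^ 2 / 2 + Real.log (1 - x) := by ring
  rw [h3]
  exact h1.trans h2

lemma log_bound3 {x : ℝ} (h0 : 0 ≤ x) (h : x ≤ 1 / 2) :
    |Real.log (1 - x) + x + x ^ 2 / 2 + x ^ 3 / 3| ≤ 2 * x ^ 4 := by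
  have h1 := Real.abs_log_sub_add_sum_range_le (x := x)
    (by rw [abs_of_nonneg h0]; linarith) 3
  simp only [sum_range_succ, sum_range_zero] at h1
  norm_num at h1
  rw [abs_of_nonneg h0] at h1
  have h2 : x ^ 4 / (1 - x) ≤ 2 * x ^ 4 := by
    rw [div_le_iff₀ (by linarith)]
    nlinarith [pow_nonneg h0 4]
  have h3 : Real.log (1 - x) + x + x ^ 2 / 2 + x ^ 3 / 3 =
    x + x ^ 2 / 2 + x ^ 3 / 3 + Real.log (1 - x) := by ring
  rw [h3]
  exact h1.trans h2

/-- One step of the Euler–Maclaurin summation of `log`. -/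
lemma euler_maclaurin_step {w : ℝ} (hw : 2 ≤ w) :
    |(w - 1 / 2) * (-Real.log (1 - 1 / w)) - 1 - 1 / (12 * w * (w - 1))| ≤ 3 / w ^ 3 := by
  obtain ⟨x, rfl⟩ : ∃ x, w = 1 / x := ⟨1 / w, by simp⟩
  have hx0 : 0 < x := by
    by_contra! h
    have := one_div_nonpos.2 h
    linarith
  have hx : x ≤ 1 / 2 := by
    rw [le_div_iff₀ hx0] at hw
    linarith
  have hl := log_bound3 hx0.le hx
  set e := Real.log (1 - x) + x + x ^ 2 / 2 + x ^ 3 / 3 with he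
  have hlog : Real.log (1 - 1 / (1 / x)) = e - x - x ^ 2 / 2 - x ^ 3 / 3 := by
    rw [one_div_one_div, he]
    ring
  have h1x : 0 < 1 - x := by linarith
  rw [hlog]
  have hid : (1 / x - 1 / 2) * (-(e - x - x ^ 2 / 2 - x ^ 3 / 3)) - 1 -
      1 / (12 * (1 / x) * (1 / x - 1)) =
      -(x ^ 3 / 6) - x ^ 3 / (12 * (1 - x)) - (1 / x - 1 / 2) * e := by
    field_simp
    ring
  rw [hid]
  have h3 : 3 / (1 / x) ^ 3 = 3 * x ^ 3 := by field_simp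
  rw [h3]
  have h4 : x ^ 3 / (12 * (1 - x)) ≤ x ^ 3 / 6 := by
    gcongr
    linarith
  have h4' : 0 ≤ x ^ 3 / (12 * (1 - x)) := by positivity
  have h5 : |(1 / x - 1 / 2) * e| ≤ 2 * x ^ 3 := by
    rw [abs_mul]
    have : |1 / x - 1 / 2| ≤ 1 / x := by
      have hx' : 2 ≤ 1 / x := hw
      rw [abs_of_nonneg (by linarith)]
      linarith
    calc _ ≤ 1 / x * (2 * x ^ 4) := by gcongr
      _ = _ := by field_simp
  have h6 := abs_le.1 h5
  have hx3 : 0 < x ^ 3 := by positivity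
  rw [abs_le]
  constructor <;> linarith [h6.1, h6.2]

/-- The antiderivative `∫₀ˢ log (1 - x) dx`. -/
noncomputable def hfun (s : ℝ) : ℝ := -(1 - s) * Real.log (1 - s) - s

/-- The Euler–Maclaurin approximation of `log ((z)_a / z ^ a)`. -/
noncomputable def emApprox (a z : ℝ) : ℝ :=
  z * hfun (a / z) - 1 / 2 * Real.log (1 - a / z) - a / (12 * z * (z - a))

lemma emApprox_step {a z : ℝ} (hz : 4 ≤ z) (haz : 2 * (a + 1) ≤ z) :
    |emApprox (a + 1) z - emApprox a z - Real.log (1 - a / z)| ≤ 24 / z ^ 3 := by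
  have hz0 : 0 < z := by linarith
  have hw : 2 ≤ z - a := by linarith
  have hw0 : 0 < z - a := by linarith
  have hw1 : 0 < z - a - 1 := by linarith
  have hlog : Real.log (1 - (a + 1) / z) = Real.log (1 - a / z) + Real.log (1 - 1 / (z - a)) := by
    rw [← Real.log_mul]
    · congr 1
      field_simp
      ring
    · have : 1 - a / z = (z - a) / z := by field_simp
      rw [this]
      positivity
    · have : 1 - 1 / (z - a) = (z - a - 1) / (z - a) := by field_simp
      rw [this]
      positivity
  have hid : emApprox (a + 1) z - emApprox a z - Real.log (1 - a / z) =
      (z - a - 1 / 2) * (-Real.log (1 - 1 / (z - a))) - 1 -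
        1 / (12 * (z - a) * (z - a - 1)) := by
    unfold emApprox hfun
    rw [hlog]
    have e1 : (a + 1) / (12 * z * (z - (a + 1))) =
        a / (12 * z * (z - a)) + 1 / (12 * (z - a) * (z - a - 1)) := by
      have : z - (a + 1) ≠ 0 := by
        have := hw1.ne'
        rwa [← sub_sub]
      field_simp
      ring
    rw [e1]
    field_simp
    ring
  rw [hid]
  refine (euler_maclaurin_step hw).trans ?_
  have h2 : z / 2 ≤ z - a := by linarith
  calc 3 / (z - a) ^ 3 ≤ 3 / (z / 2) ^ 3 := by gcongr
    _ = 24 / z ^ 3 := by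
      field_simp
      norm_num

/-- Summing the Euler–Maclaurin steps over the factors of the falling factorial; the error per
factor is `O(z⁻³)`. -/
lemma log_descFactorial (a z : ℕ) (hz : 4 ≤ z) (haz : 2 * a ≤ z) :
    |Real.log ((Nat.descFactorial z a : ℝ) / (z : ℝ) ^ a) - emApprox a z| ≤
      24 * a / (z : ℝ) ^ 3 := by
  have hz0 : (0 : ℝ) < z := by exact_mod_cast (by omega : 0 < z)
  induction a with
  | zero => simp [emApprox, hfun]
  | succ a ih =>
    have ih' := ih (by omega)
    have hst := emApprox_step (a := a) (z := z) (by exact_mod_cast hz)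
      (by exact_mod_cast haz)
    have hd : (0 : ℝ) < Nat.descFactorial z a := by
      exact_mod_cast Nat.descFactorial_pos.2 (by omega)
    have hlog : Real.log ((Nat.descFactorial z (a + 1) : ℝ) / (z : ℝ) ^ (a + 1)) =
        Real.log ((Nat.descFactorial z a : ℝ) / (z : ℝ) ^ a) + Real.log (1 - a / z) := by
      have h1 : 0 < 1 - (a : ℝ) / z := by
        rw [sub_pos, div_lt_one hz0]
        exact_mod_cast (by omega : a < z)
      rw [← Real.log_mul (by positivity) h1.ne']
      congr 1
      rw [Nat.descFactorial_succ, Nat.cast_mul, Nat.cast_sub (by omega)]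
      field_simp
      ring
    rw [hlog]
    push_cast
    have h2 : 24 * ((a : ℝ) + 1) / (z : ℝ) ^ 3 = 24 * a / (z : ℝ) ^ 3 + 24 / (z : ℝ) ^ 3 := by ring
    rw [h2]
    have h3 := abs_le.1 ih'
    have h4 := abs_le.1 hst
    rw [abs_le]
    constructor <;> linarith [h3.1, h3.2, h4.1, h4.2]

/-- The Bregman divergence of `hfun` is `-(s - t)² / 2` up to a relative error of the order of
`s` and `t`. -/
lemma hfun_bregman {s t η : ℝ} (hs0 : 0 ≤ s) (ht0 : 0 ≤ t) (hη : η ≤ 1 / 4) (hs : s ≤ η)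
    (ht : t ≤ η) :
    |hfun s - hfun t - Real.log (1 - t) * (s - t) + (s - t) ^ 2 / 2| ≤ 15 * η * (s - t) ^ 2 := by
  have h1t : 0 < 1 - t := by linarith
  have h1s : 0 < 1 - s := by linarith
  obtain ⟨w, hw⟩ : ∃ w, w = (s - t) / (1 - t) := ⟨_, rfl⟩
  have hst : s - t = w * (1 - t) := by rw [hw]; field_simp
  have hη0 : 0 ≤ η := hs0.trans hs
  have hstη : |s - t| ≤ η := by
    rw [abs_le]
    constructor <;> linarith
  have hwabs : |w| ≤ 4 / 3 * η := by
    rw [hw, abs_div, abs_of_pos h1t, div_le_iff₀ h1t]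
    nlinarith
  have hw2 : |w| ≤ 1 / 2 := by linarith
  have hls : Real.log (1 - s) = Real.log (1 - t) + Real.log (1 - w) := by
    have : 1 - s = (1 - t) * (1 - w) := by linear_combination -hst
    have h1w : 0 < 1 - w := by linarith [le_abs_self w]
    rw [this, Real.log_mul h1t.ne' h1w.ne']
  have hl := log_bound2 hw2
  set e := Real.log (1 - w) + w + w ^ 2 / 2 with he
  have hlw : Real.log (1 - w) = e - w - w ^ 2 / 2 := by rw [he]; ring
  have hs' : s = t + w * (1 - t) := by linarith
  have hid : hfun s - hfun t - Real.log (1 - t) * (s - t) + (s - t) ^ 2 / 2 =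
      -(1 - t) * (w ^ 3 / 2 + (1 - w) * e) - t * (1 - t) * w ^ 2 / 2 := by
    unfold hfun
    rw [hls, hlw, hs']
    ring
  rw [hid]
  have hsq : (s - t) ^ 2 = w ^ 2 * (1 - t) ^ 2 := by rw [hst]; ring
  rw [hsq]
  have h1 : |w ^ 3 / 2 + (1 - w) * e| ≤ 7 / 2 * |w| ^ 3 := by
    have h2 : |1 - w| ≤ 3 / 2 := by
      have := abs_le.1 hw2
      rw [abs_le]
      constructor <;> linarith
    calc |w ^ 3 / 2 + (1 - w) * e| ≤ |w ^ 3 / 2| + |(1 - w) * e| := abs_add_le _ _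
      _ ≤ |w| ^ 3 / 2 + 3 / 2 * (2 * |w| ^ 3) := by
          rw [abs_mul, abs_div, abs_pow, abs_two]
          gcongr
      _ = _ := by ring
  have h3 : |w| ^ 3 ≤ 4 / 3 * η * w ^ 2 := by
    have : |w| ^ 3 = |w| * w ^ 2 := by rw [← sq_abs w]; ring
    rw [this]
    gcongr
  have h4 : |(1 - t) * (w ^ 3 / 2 + (1 - w) * e)| ≤ (1 - t) * (14 / 3 * η * w ^ 2) := by
    rw [abs_mul, abs_of_pos h1t]
    gcongr
    linarith
  have hA : 0 ≤ (1 - t) * w ^ 2 := by positivity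
  have h5 : t * ((1 - t) * w ^ 2) ≤ η * ((1 - t) * w ^ 2) := by gcongr
  have h5' : 0 ≤ t * ((1 - t) * w ^ 2) := by positivity
  have h6 : 3 / 4 * (η * ((1 - t) * w ^ 2)) ≤ 1 * η * (w ^ 2 * (1 - t) ^ 2) := by
    have : 1 * η * (w ^ 2 * (1 - t) ^ 2) = (1 - t) * (η * ((1 - t) * w ^ 2)) := by ring
    rw [this]
    gcongr
    linarith
  have h7 := abs_le.1 h4
  have h8 : 0 ≤ η * ((1 - t) * w ^ 2) := by positivity
  rw [abs_le]
  constructor <;> nlinarith [h7.1, h7.2]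

/-! ### Deterministic expansion for a typical configuration -/

/-- A typical configuration in rescaled form: `a` is the planting with mean `α`, the occupancies are
`z_i = μ (1 + q_i)`, `r = √n`, and `C` is the constant of the size assumptions on `α` and `μ`. -/
structure Typical (n : ℕ) (a q : Fin n → ℝ) (α μ r C η : ℝ) : Prop where
  hr : r ^ 2 = n
  hr0 : 0 < r
  hC : 1 ≤ C
  hη0 : 0 < η
  hη : η ≤ 1 / 4
  hμ : 0 < μ
  hα : 0 ≤ α
  ha : ∀ i, 0 ≤ a i
  hαr : α * r ≤ C * μ
  hrμ : r ≤ C * μ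
  hCμ : C ≤ η * μ
  hb : ∑ i, (a i - α) = 0
  hB : ∑ i, (a i - α) ^ 2 ≤ C * μ
  hq : ∀ i, |q i| ≤ η
  hq0 : ∑ i, q i = 0
  hQ : |∑ i, q i ^ 2 - n / μ| ≤ η * (n / μ)
  hbq : |∑ i, (a i - α) * q i| ≤ η * r
  hs : ∀ i, a i / (μ * (1 + q i)) ≤ η
  ht : α / μ ≤ η

namespace Typical

variable {n : ℕ} {a q : Fin n → ℝ} {α μ r C η : ℝ}

/-! The next four lemmas bound the only scale-free combinations of `α`, `μ` and `n` that occur. -/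

lemma x_le (T : Typical n a q α μ r C η) : α * r / μ ≤ C := by
  have := T.hμ
  rw [div_le_iff₀ this]
  exact T.hαr

lemma y_le (T : Typical n a q α μ r C η) : r / μ ≤ C := by
  have := T.hμ
  rw [div_le_iff₀ this]
  exact T.hrμ

lemma xx_le (T : Typical n a q α μ r C η) : α ^ 2 * n / μ ^ 2 ≤ C ^ 2 := by
  have h : α ^ 2 * n / μ ^ 2 = (α * r / μ) ^ 2 := by rw [← T.hr]; ring
  have := T.hμ; have := T.hα; have := T.hr0
  rw [h]
  gcongr
  exact T.x_le

lemma xy_le (T : Typical n a q α μ r C η) : α * n / μ ^ 2 ≤ C ^ 2 := by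
  have h : α * n / μ ^ 2 = (α * r / μ) * (r / μ) := by rw [← T.hr]; ring
  have := T.hμ; have := T.hα; have := T.hr0; have := T.hC
  rw [h, sq]
  gcongr
  · exact T.x_le
  · exact T.y_le

lemma C_le (T : Typical n a q α μ r C η) : C ≤ C ^ 2 := by nlinarith [T.hC]

lemma one_le_sq (T : Typical n a q α μ r C η) : 1 ≤ C ^ 2 := by nlinarith [T.hC]

lemma Q_le (T : Typical n a q α μ r C η) : ∑ i, q i ^ 2 ≤ 2 * (n / μ) := by
  have h := (abs_le.1 T.hQ).2
  have h0 : 0 ≤ (n : ℝ) / μ := by have := T.hμ; positivity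
  nlinarith [T.hη]

lemma sum_a (T : Typical n a q α μ r C η) : ∑ i, a i = n * α := by
  have h := T.hb
  rw [sum_sub_distrib] at h
  simp at h
  linarith

lemma sum_a_sq (T : Typical n a q α μ r C η) :
    ∑ i, a i ^ 2 = n * α ^ 2 + ∑ i, (a i - α) ^ 2 := by
  have h : ∀ i, a i ^ 2 = (a i - α) ^ 2 + 2 * α * (a i - α) + α ^ 2 := fun i => by ring
  rw [sum_congr rfl fun i _ => h i, sum_add_distrib, sum_add_distrib, ← mul_sum, T.hb]
  simp
  ring

lemma q_bds (T : Typical n a q α μ r C η) (i : Fin n) : 3 / 4 ≤ 1 + q i ∧ 1 + q i ≤ 5 / 4 := by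
  have h := abs_le.1 (T.hq i)
  have := T.hη
  constructor <;> linarith [h.1, h.2]

lemma inv_sub_one (T : Typical n a q α μ r C η) (i : Fin n) : |1 / (1 + q i) - 1| ≤ 2 * η := by
  have h := T.q_bds i
  have h0 : 0 < 1 + q i := by linarith [h.1]
  have e : 1 / (1 + q i) - 1 = -(q i) / (1 + q i) := by
    field_simp
    ring
  rw [e, abs_div, abs_neg, abs_of_pos h0, div_le_iff₀ h0]
  nlinarith [T.hq i, T.hη0, h.1]

/-- Expansion of the squared deviations of `a_i` from `z_i α / μ = α (1 + q_i)`. -/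
lemma sum_d_sq :
    ∑ i, (a i - α - α * q i) ^ 2 =
      ∑ i, (a i - α) ^ 2 - 2 * α * ∑ i, (a i - α) * q i + α ^ 2 * ∑ i, q i ^ 2 := by
  rw [mul_sum, mul_sum, ← sum_sub_distrib, ← sum_add_distrib]
  exact sum_congr rfl fun i _ => by ring

lemma sum_d_sq_le (T : Typical n a q α μ r C η) :
    (∑ i, (a i - α - α * q i) ^ 2) / μ ≤ 6 * C ^ 2 := by
  have hμ := T.hμ
  have h1 : ∑ i, (a i - α - α * q i) ^ 2 ≤ 2 * (C * μ) + 2 * (α ^ 2 * (2 * (n / μ))) := by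
    calc _ ≤ ∑ i, (2 * (a i - α) ^ 2 + 2 * (α ^ 2 * q i ^ 2)) := by
          refine sum_le_sum fun i _ => ?_
          nlinarith [sq_nonneg (a i - α + α * q i)]
      _ = 2 * ∑ i, (a i - α) ^ 2 + 2 * (α ^ 2 * ∑ i, q i ^ 2) := by
          rw [sum_add_distrib, mul_sum, mul_sum, mul_sum]
      _ ≤ _ := by
          gcongr
          · exact T.hB
          · exact T.Q_le
  calc _ ≤ (2 * (C * μ) + 2 * (α ^ 2 * (2 * (n / μ)))) / μ := by gcongr
    _ = 2 * C + 4 * (α ^ 2 * n / μ ^ 2) := by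
        field_simp
        ring
    _ ≤ _ := by nlinarith [T.xx_le, T.C_le]

/-- The weighted sum of squared deviations is `∑ (a_i - α)² / μ + α² n / μ²` up to `O(η)`; the
second term is the contribution of `α² ∑ q_i² / μ`, where `∑ q_i² ≈ n / μ`. -/
lemma quad (T : Typical n a q α μ r C η) :
    |(∑ i, (a i - α - α * q i) ^ 2 / (μ * (1 + q i))) -
      ((∑ i, (a i - α) ^ 2) / μ + α ^ 2 * n / μ ^ 2)| ≤ 15 * C ^ 2 * η := by
  have hμ := T.hμ
  have hη0 := T.hη0
  have h1 : |(∑ i, (a i - α - α * q i) ^ 2 / (μ * (1 + q i))) -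
      (∑ i, (a i - α - α * q i) ^ 2) / μ| ≤ 12 * C ^ 2 * η := by
    rw [sum_div, ← sum_sub_distrib]
    calc _ ≤ ∑ i, |(a i - α - α * q i) ^ 2 / (μ * (1 + q i)) - (a i - α - α * q i) ^ 2 / μ| :=
          abs_sum_le_sum_abs _ _
      _ ≤ ∑ i, (a i - α - α * q i) ^ 2 / μ * (2 * η) := by
          refine sum_le_sum fun i _ => ?_
          have h0 : 0 < 1 + q i := by linarith [(T.q_bds i).1]
          have e : (a i - α - α * q i) ^ 2 / (μ * (1 + q i)) - (a i - α - α * q i) ^ 2 / μ =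
              (a i - α - α * q i) ^ 2 / μ * (1 / (1 + q i) - 1) := by
            field_simp
          rw [e, abs_mul, abs_of_nonneg (by positivity)]
          gcongr
          exact T.inv_sub_one i
      _ = (∑ i, (a i - α - α * q i) ^ 2) / μ * (2 * η) := by rw [← sum_mul, sum_div]
      _ ≤ 6 * C ^ 2 * (2 * η) := by
          gcongr
          exact T.sum_d_sq_le
      _ = _ := by ring
  have h2 : (∑ i, (a i - α - α * q i) ^ 2) / μ =
      ((∑ i, (a i - α) ^ 2) / μ + α ^ 2 * n / μ ^ 2) +
      (-(2 * (α / μ * ∑ i, (a i - α) * q i)) + α ^ 2 / μ * (∑ i, q i ^ 2 - n / μ)) := by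
    rw [sum_d_sq]
    field_simp
    ring
  have hα := T.hα
  have h3 : |α / μ * ∑ i, (a i - α) * q i| ≤ C ^ 2 * η := by
    rw [abs_mul, abs_of_nonneg (by positivity)]
    calc _ ≤ α / μ * (η * r) := by
          gcongr
          exact T.hbq
      _ = (α * r / μ) * η := by ring
      _ ≤ _ := by
          gcongr
          exact T.x_le.trans T.C_le
  have h4 : |α ^ 2 / μ * (∑ i, q i ^ 2 - n / μ)| ≤ C ^ 2 * η := by
    rw [abs_mul, abs_of_nonneg (by positivity)]
    calc _ ≤ α ^ 2 / μ * (η * (n / μ)) := by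
          gcongr
          exact T.hQ
      _ = (α ^ 2 * n / μ ^ 2) * η := by
          field_simp
      _ ≤ _ := by
          gcongr
          exact T.xx_le
  rw [h2] at h1
  have := abs_le.1 h1
  have := abs_le.1 h3
  have := abs_le.1 h4
  rw [abs_le]
  constructor <;> linarith

/-- The second-order part of `∑ z_i hfun (a_i / z_i)` around the point `k / m = α / μ`. -/
lemma bregman_sum (T : Typical n a q α μ r C η) :
    |(∑ i, μ * (1 + q i) * (hfun (a i / (μ * (1 + q i))) - hfun (α / μ) -
        Real.log (1 - α / μ) * (a i / (μ * (1 + q i)) - α / μ))) +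
      1 / 2 * ((∑ i, (a i - α) ^ 2) / μ + α ^ 2 * n / μ ^ 2)| ≤ 200 * C ^ 2 * η := by
  have hμ := T.hμ
  have hη0 := T.hη0
  have hα := T.hα
  have hid : ∀ i, μ * (1 + q i) * (a i / (μ * (1 + q i)) - α / μ) ^ 2 =
      (a i - α - α * q i) ^ 2 / (μ * (1 + q i)) := by
    intro i
    have h0 : 0 < 1 + q i := by linarith [(T.q_bds i).1]
    field_simp
    ring
  have h1 : |(∑ i, μ * (1 + q i) * (hfun (a i / (μ * (1 + q i))) - hfun (α / μ) -
        Real.log (1 - α / μ) * (a i / (μ * (1 + q i)) - α / μ))) +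
      1 / 2 * ∑ i, (a i - α - α * q i) ^ 2 / (μ * (1 + q i))| ≤ 180 * C ^ 2 * η := by
    rw [mul_sum, ← sum_add_distrib]
    calc _ ≤ ∑ i, |μ * (1 + q i) * (hfun (a i / (μ * (1 + q i))) - hfun (α / μ) -
        Real.log (1 - α / μ) * (a i / (μ * (1 + q i)) - α / μ)) +
          1 / 2 * ((a i - α - α * q i) ^ 2 / (μ * (1 + q i)))| := abs_sum_le_sum_abs _ _
      _ ≤ ∑ i, 15 * η * (2 * ((a i - α - α * q i) ^ 2 / μ)) := by
          refine sum_le_sum fun i _ => ?_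
          have hq := T.q_bds i
          have h0 : 0 < 1 + q i := by linarith [hq.1]
          have hz : 0 < μ * (1 + q i) := by positivity
          have e : μ * (1 + q i) * (hfun (a i / (μ * (1 + q i))) - hfun (α / μ) -
              Real.log (1 - α / μ) * (a i / (μ * (1 + q i)) - α / μ)) +
              1 / 2 * ((a i - α - α * q i) ^ 2 / (μ * (1 + q i))) =
            μ * (1 + q i) * (hfun (a i / (μ * (1 + q i))) - hfun (α / μ) -
              Real.log (1 - α / μ) * (a i / (μ * (1 + q i)) - α / μ) +
              (a i / (μ * (1 + q i)) - α / μ) ^ 2 / 2) := by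
            rw [← hid]
            ring
          rw [e, abs_mul, abs_of_pos hz]
          have hbr := hfun_bregman (s := a i / (μ * (1 + q i))) (t := α / μ) (η := η)
            (div_nonneg (T.ha i) hz.le) (by positivity) T.hη (T.hs i) T.ht
          calc _ ≤ μ * (1 + q i) * (15 * η * (a i / (μ * (1 + q i)) - α / μ) ^ 2) := by gcongr
            _ = 15 * η * ((a i - α - α * q i) ^ 2 / (μ * (1 + q i))) := by
                rw [← hid]
                ring
            _ = 15 * η * (1 / (1 + q i) * ((a i - α - α * q i) ^ 2 / μ)) := by
                congr 1
                field_simp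
            _ ≤ _ := by
                gcongr
                rw [div_le_iff₀ h0]
                linarith [hq.1]
      _ = 30 * η * ((∑ i, (a i - α - α * q i) ^ 2) / μ) := by
          rw [← mul_sum, ← mul_sum, sum_div]
          ring
      _ ≤ 30 * η * (6 * C ^ 2) := by
          gcongr
          exact T.sum_d_sq_le
      _ = _ := by ring
  have h2 := abs_le.1 T.quad
  have h3 := abs_le.1 h1
  have h4 : 0 ≤ C ^ 2 * η := by positivity
  rw [abs_le]
  constructor <;> linarith [h2.1, h2.2, h3.1, h3.2]

lemma sum_abs_b_q (T : Typical n a q α μ r C η) :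
    (∑ i, |a i - α| * |q i|) / μ ≤ 2 * C ^ 2 := by
  have hμ := T.hμ
  have hr0 := T.hr0
  have hC := T.hC
  have h1 : ∑ i, |a i - α| * |q i| ≤
      1 / 2 * (r / μ * ∑ i, (a i - α) ^ 2 + μ / r * ∑ i, q i ^ 2) := by
    rw [mul_sum, mul_sum, ← sum_add_distrib, mul_sum]
    refine sum_le_sum fun i _ => ?_
    -- Young's inequality with weight `r / μ`, which balances the two sums
    have h := sq_nonneg (r * |a i - α| - μ * |q i|)
    have e : 1 / 2 * (r / μ * (a i - α) ^ 2 + μ / r * q i ^ 2) - |a i - α| * |q i| =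
        (r * |a i - α| - μ * |q i|) ^ 2 / (2 * (r * μ)) := by
      rw [← sq_abs (a i - α), ← sq_abs (q i)]
      field_simp
      ring
    have h2 : 0 ≤ (r * |a i - α| - μ * |q i|) ^ 2 / (2 * (r * μ)) := by positivity
    linarith
  calc _ ≤ 1 / 2 * (r / μ * (C * μ) + μ / r * (2 * (n / μ))) / μ := by
        gcongr
        refine h1.trans ?_
        gcongr
        · exact T.hB
        · exact T.Q_le
    _ = 1 / 2 * (C + 2) * (r / μ) := by
        rw [← T.hr]
        field_simp
    _ ≤ 1 / 2 * (C + 2) * C := by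
        gcongr
        exact T.y_le
    _ ≤ _ := by nlinarith

/-- Second-order expansion of `∑ a_i / z_i`: the linear term in `q` is small because
`∑ q_i = 0` and `∑ (a_i - α) q_i` is small, and the quadratic one contributes `α n / μ²`. -/
lemma lin (T : Typical n a q α μ r C η) :
    |(∑ i, a i / (μ * (1 + q i))) - (α * n / μ + α * n / μ ^ 2)| ≤ 10 * C ^ 2 * η := by
  have hμ := T.hμ
  have hη0 := T.hη0
  have hα := T.hα
  have hpt : ∀ i, a i / (μ * (1 + q i)) = (a i - α * q i - (a i - α) * q i + α * q i ^ 2) / μ +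
      ((a i - α) * q i ^ 2 - α * q i ^ 3) / (μ * (1 + q i)) := by
    intro i
    have h0 : 0 < 1 + q i := by linarith [(T.q_bds i).1]
    field_simp
    ring
  have hR : |∑ i, ((a i - α) * q i ^ 2 - α * q i ^ 3) / (μ * (1 + q i))| ≤ 8 * C ^ 2 * η := by
    calc _ ≤ ∑ i, |((a i - α) * q i ^ 2 - α * q i ^ 3) / (μ * (1 + q i))| :=
          abs_sum_le_sum_abs _ _
      _ ≤ ∑ i, (2 * η * (|a i - α| * |q i| / μ) + 2 * η * (α / μ * q i ^ 2)) := by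
          refine sum_le_sum fun i _ => ?_
          have hq := T.q_bds i
          have h0 : 0 < 1 + q i := by linarith [hq.1]
          have hz : 0 < μ * (1 + q i) := by positivity
          rw [abs_div, abs_of_pos hz, div_le_iff₀ hz]
          have e : (2 * η * (|a i - α| * |q i| / μ) + 2 * η * (α / μ * q i ^ 2)) *
              (μ * (1 + q i)) = (η * (|a i - α| * |q i|) + η * (α * q i ^ 2)) *
                (2 * (1 + q i)) := by
            field_simp
          rw [e]
          have h1 : |(a i - α) * q i ^ 2 - α * q i ^ 3| ≤
              η * (|a i - α| * |q i|) + η * (α * q i ^ 2) := by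
            calc _ ≤ |(a i - α) * q i ^ 2| + |α * q i ^ 3| := abs_sub _ _
              _ = |q i| * (|a i - α| * |q i|) + |q i| * (α * |q i| ^ 2) := by
                  rw [abs_mul, abs_mul, abs_pow, abs_pow, abs_of_nonneg hα]
                  ring
              _ ≤ η * (|a i - α| * |q i|) + η * (α * |q i| ^ 2) := by
                  gcongr
                  · exact T.hq i
                  · exact T.hq i
              _ = _ := by rw [sq_abs]
          have h2 : 0 ≤ η * (|a i - α| * |q i|) + η * (α * q i ^ 2) := by positivity
          nlinarith [hq.1]
      _ = 2 * η * ((∑ i, |a i - α| * |q i|) / μ) + 2 * η * (α / μ * ∑ i, q i ^ 2) := by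
          rw [sum_add_distrib, sum_div, mul_sum, mul_sum, mul_sum]
      _ ≤ 2 * η * (2 * C ^ 2) + 2 * η * (α / μ * (2 * (n / μ))) := by
          gcongr
          · exact T.sum_abs_b_q
          · exact T.Q_le
      _ = 4 * C ^ 2 * η + 4 * η * (α * n / μ ^ 2) := by
          field_simp
          ring
      _ ≤ 4 * C ^ 2 * η + 4 * η * C ^ 2 := by
          gcongr
          exact T.xy_le
      _ = _ := by ring
  have hM : ∑ i, (a i - α * q i - (a i - α) * q i + α * q i ^ 2) / μ =
      (α * n / μ + α * n / μ ^ 2) +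
        (-((∑ i, (a i - α) * q i) / μ) + α / μ * (∑ i, q i ^ 2 - n / μ)) := by
    rw [← sum_div, sum_add_distrib, sum_sub_distrib, sum_sub_distrib, ← mul_sum, ← mul_sum, T.hq0,
      T.sum_a]
    field_simp
    ring
  have h3 : |(∑ i, (a i - α) * q i) / μ| ≤ C ^ 2 * η := by
    rw [abs_div, abs_of_pos hμ]
    calc _ ≤ η * r / μ := by
          gcongr
          exact T.hbq
      _ = (r / μ) * η := by ring
      _ ≤ _ := by
          gcongr
          exact T.y_le.trans T.C_le
  have h4 : |α / μ * (∑ i, q i ^ 2 - n / μ)| ≤ C ^ 2 * η := by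
    rw [abs_mul, abs_of_nonneg (by positivity)]
    calc _ ≤ α / μ * (η * (n / μ)) := by
          gcongr
          exact T.hQ
      _ = (α * n / μ ^ 2) * η := by
          field_simp
      _ ≤ _ := by
          gcongr
          exact T.xy_le
  rw [sum_congr rfl fun i _ => hpt i, sum_add_distrib, hM]
  have := abs_le.1 h3
  have := abs_le.1 h4
  have := abs_le.1 hR
  rw [abs_le]
  constructor <;> linarith

lemma sq_bd (T : Typical n a q α μ r C η) :
    |(∑ i, (a i / (μ * (1 + q i))) ^ 2) - α ^ 2 * n / μ ^ 2| ≤ 10 * C ^ 2 * η := by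
  have hμ := T.hμ
  have hη0 := T.hη0
  have hη := T.hη
  have hBμ : (∑ i, (a i - α) ^ 2) / μ ^ 2 ≤ η := by
    calc _ ≤ C * μ / μ ^ 2 := by
          gcongr
          exact T.hB
      _ = C / μ := by field_simp
      _ ≤ η := by
          rw [div_le_iff₀ hμ]
          exact T.hCμ
  have hB0 : 0 ≤ (∑ i, (a i - α) ^ 2) / μ ^ 2 := by positivity
  have hS : (∑ i, a i ^ 2) / μ ^ 2 = α ^ 2 * n / μ ^ 2 + (∑ i, (a i - α) ^ 2) / μ ^ 2 := by
    rw [T.sum_a_sq]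
    ring
  have h1 : |(∑ i, (a i / (μ * (1 + q i))) ^ 2) - (∑ i, a i ^ 2) / μ ^ 2| ≤
      (∑ i, a i ^ 2) / μ ^ 2 * (4 * η) := by
    rw [sum_div, ← sum_sub_distrib, sum_mul]
    refine (abs_sum_le_sum_abs _ _).trans (sum_le_sum fun i _ => ?_)
    have hq := T.q_bds i
    have h0 : 0 < 1 + q i := by linarith [hq.1]
    have e : (a i / (μ * (1 + q i))) ^ 2 - a i ^ 2 / μ ^ 2 =
        a i ^ 2 / μ ^ 2 * (-(q i * (2 + q i)) / (1 + q i) ^ 2) := by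
      field_simp
      ring
    rw [e, abs_mul, abs_of_nonneg (by positivity : 0 ≤ a i ^ 2 / μ ^ 2)]
    gcongr
    rw [abs_div, abs_neg, abs_mul, abs_of_pos (by positivity : 0 < (1 + q i) ^ 2),
      abs_of_pos (by linarith [hq.1] : 0 < 2 + q i), div_le_iff₀ (by positivity)]
    have : |q i| * (2 + q i) ≤ η * (9 / 4) := by
      gcongr
      · linarith [hq.1]
      · exact T.hq i
      · linarith [hq.2]
    nlinarith [hq.1, sq_nonneg (1 + q i - 3 / 4)]
  have h2 : (∑ i, a i ^ 2) / μ ^ 2 ≤ C ^ 2 + 1 / 4 := by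
    rw [hS]
    linarith [T.xx_le]
  have h3 : (∑ i, a i ^ 2) / μ ^ 2 * (4 * η) ≤ (C ^ 2 + 1 / 4) * (4 * η) := by gcongr
  have h4 := abs_le.1 (h1.trans h3)
  have h5 : η ≤ C ^ 2 * η := by nlinarith [T.one_le_sq]
  rw [abs_le]
  rw [hS] at h4
  constructor <;> linarith [h4.1, h4.2]

lemma sq_le (T : Typical n a q α μ r C η) :
    ∑ i, (a i / (μ * (1 + q i))) ^ 2 ≤ 4 * C ^ 2 := by
  have h := (abs_le.1 T.sq_bd).2
  nlinarith [T.xx_le, T.hη, T.one_le_sq]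

/-- The endpoint correction `-½ log (1 - a_i / z_i)` of the Euler–Maclaurin formula. -/
lemma log_sum (T : Typical n a q α μ r C η) :
    |(∑ i, -(1 / 2 * Real.log (1 - a i / (μ * (1 + q i))))) -
      (1 / 2 * (α * n / μ + α * n / μ ^ 2) + 1 / 4 * (α ^ 2 * n / μ ^ 2))| ≤
      15 * C ^ 2 * η := by
  have hη0 := T.hη0
  have h1 : |(∑ i, -(1 / 2 * Real.log (1 - a i / (μ * (1 + q i))))) -
      (1 / 2 * (∑ i, a i / (μ * (1 + q i))) + 1 / 4 * ∑ i, (a i / (μ * (1 + q i))) ^ 2)| ≤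
      4 * C ^ 2 * η := by
    rw [mul_sum, mul_sum, ← sum_add_distrib, ← sum_sub_distrib]
    calc _ ≤ ∑ i, |-(1 / 2 * Real.log (1 - a i / (μ * (1 + q i)))) -
          (1 / 2 * (a i / (μ * (1 + q i))) + 1 / 4 * (a i / (μ * (1 + q i))) ^ 2)| :=
          abs_sum_le_sum_abs _ _
      _ ≤ ∑ i, η * (a i / (μ * (1 + q i))) ^ 2 := by
          refine sum_le_sum fun i _ => ?_
          have hq := T.q_bds i
          have h0 : 0 < 1 + q i := by linarith [hq.1]
          have hμ := T.hμ
          have hz : 0 < μ * (1 + q i) := by positivity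
          have hs0 : 0 ≤ a i / (μ * (1 + q i)) := div_nonneg (T.ha i) hz.le
          have hsη := T.hs i
          generalize a i / (μ * (1 + q i)) = s at hs0 hsη ⊢
          have hl := log_bound2 (x := s) (by rw [abs_of_nonneg hs0]; linarith [T.hη])
          rw [abs_of_nonneg hs0] at hl
          have e : -(1 / 2 * Real.log (1 - s)) - (1 / 2 * s + 1 / 4 * s ^ 2) =
              -(1 / 2) * (Real.log (1 - s) + s + s ^ 2 / 2) := by ring
          rw [e, abs_mul]
          norm_num
          have : s ^ 3 ≤ η * s ^ 2 := by
            rw [pow_succ, mul_comm]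
            gcongr
          linarith
      _ = η * ∑ i, (a i / (μ * (1 + q i))) ^ 2 := by rw [mul_sum]
      _ ≤ η * (4 * C ^ 2) := by
          gcongr
          exact T.sq_le
      _ = _ := by ring
  have h2 := abs_le.1 h1
  have h3 := abs_le.1 T.lin
  have h4 := abs_le.1 T.sq_bd
  have h5 : 0 ≤ C ^ 2 * η := by positivity
  rw [abs_le]
  constructor <;> linarith [h2.1, h2.2, h3.1, h3.2, h4.1, h4.2]

/-- The next Euler–Maclaurin correction; only its leading order matters. -/
lemma third (T : Typical n a q α μ r C η) :
    |(∑ i, a i / (12 * (μ * (1 + q i)) * (μ * (1 + q i) - a i))) - α * n / (12 * μ ^ 2)| ≤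
      C ^ 2 * η := by
  have hμ := T.hμ
  have hη0 := T.hη0
  have hη := T.hη
  have hS : α * n / (12 * μ ^ 2) = ∑ i, a i / (12 * μ ^ 2) := by
    rw [← sum_div, T.sum_a]
    ring
  rw [hS, ← sum_sub_distrib]
  calc _ ≤ ∑ i, |a i / (12 * (μ * (1 + q i)) * (μ * (1 + q i) - a i)) - a i / (12 * μ ^ 2)| :=
        abs_sum_le_sum_abs _ _
    _ ≤ ∑ i, a i / (12 * μ ^ 2) * (10 * η) := by
        refine sum_le_sum fun i _ => ?_
        have hq := T.q_bds i
        have h0 : 0 < 1 + q i := by linarith [hq.1]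
        have hz : 0 < μ * (1 + q i) := by positivity
        have hs0 : 0 ≤ a i / (μ * (1 + q i)) := div_nonneg (T.ha i) hz.le
        have hsη := T.hs i
        have ha := T.ha i
        have has : a i = a i / (μ * (1 + q i)) * (μ * (1 + q i)) := by field_simp
        obtain ⟨s, hs⟩ : ∃ s, s = a i / (μ * (1 + q i)) := ⟨_, rfl⟩
        rw [← hs] at hs0 hsη has
        have h1s : 0 < 1 - s := by linarith
        have e0 : μ * (1 + q i) - a i = μ * (1 + q i) * (1 - s) := by
          rw [has]
          ring
        have e : a i / (12 * (μ * (1 + q i)) * (μ * (1 + q i) - a i)) - a i / (12 * μ ^ 2) =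
            a i / (12 * μ ^ 2) * ((1 - (1 + q i) ^ 2 * (1 - s)) / ((1 + q i) ^ 2 * (1 - s))) := by
          rw [e0]
          field_simp
        rw [e, abs_mul, abs_of_nonneg (by positivity : 0 ≤ a i / (12 * μ ^ 2))]
        gcongr
        have hden : 0 < (1 + q i) ^ 2 * (1 - s) := by positivity
        rw [abs_div, abs_of_pos hden, div_le_iff₀ hden]
        have hden' : 27 / 64 ≤ (1 + q i) ^ 2 * (1 - s) := by
          have : (3 / 4 : ℝ) ^ 2 * (3 / 4) ≤ (1 + q i) ^ 2 * (1 - s) := by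
            gcongr
            · exact hq.1
            · linarith
          linarith
        have e2 : 1 - (1 + q i) ^ 2 * (1 - s) = -(q i * (2 + q i)) + (1 + q i) ^ 2 * s := by ring
        have h3 : |1 - (1 + q i) ^ 2 * (1 - s)| ≤ 4 * η := by
          rw [e2]
          calc _ ≤ |-(q i * (2 + q i))| + |(1 + q i) ^ 2 * s| := abs_add_le _ _
            _ = |q i| * (2 + q i) + (1 + q i) ^ 2 * s := by
                rw [abs_neg, abs_mul, abs_of_pos (by linarith [hq.1] : 0 < 2 + q i),
                  abs_of_nonneg (by positivity : 0 ≤ (1 + q i) ^ 2 * s)]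
            _ ≤ η * (9 / 4) + (5 / 4) ^ 2 * η := by
                gcongr
                · linarith [hq.1]
                · exact T.hq i
                · linarith [hq.2]
                · exact hq.2
            _ ≤ 4 * η := by linarith
        nlinarith
    _ = 10 / 12 * (α * n / μ ^ 2) * η := by
        rw [← sum_mul, ← sum_div, T.sum_a]
        ring
    _ ≤ 10 / 12 * C ^ 2 * η := by
        gcongr
        exact T.xy_le
    _ ≤ _ := by
        have : 0 ≤ C ^ 2 * η := by positivity
        linarith

lemma inv_le (T : Typical n a q α μ r C η) : 1 / μ ≤ η := by
  rw [div_le_iff₀ T.hμ]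
  linarith [T.hC, T.hCμ]

/-- The total Euler–Maclaurin remainder is negligible. -/
lemma rem (T : Typical n a q α μ r C η) :
    ∑ i, 24 * a i / (μ * (1 + q i)) ^ 3 ≤ 72 * C ^ 2 * η := by
  have hμ := T.hμ
  have hη0 := T.hη0
  calc _ ≤ ∑ i, 72 * a i / μ ^ 3 := by
        refine sum_le_sum fun i _ => ?_
        have hq := T.q_bds i
        have ha := T.ha i
        have h1 : (μ * (3 / 4)) ^ 3 ≤ (μ * (1 + q i)) ^ 3 := by
          gcongr
          exact hq.1
        calc _ ≤ 24 * a i / (μ * (3 / 4)) ^ 3 := by gcongr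
          _ = 24 * 64 / 27 * (a i / μ ^ 3) := by
              field_simp
              ring
          _ ≤ 72 * (a i / μ ^ 3) := by
              gcongr
              norm_num
          _ = _ := by ring
    _ = 72 * (α * n / μ ^ 2) * (1 / μ) := by
        rw [← sum_div, ← mul_sum, T.sum_a]
        field_simp
    _ ≤ 72 * C ^ 2 * η := by
        gcongr
        · exact T.xy_le
        · exact T.inv_le

end Typical

lemma abs_log_one_sub_le {t : ℝ} (h0 : 0 ≤ t) (h1 : t ≤ 1 / 4) : |Real.log (1 - t)| ≤ 2 * t := by
  have h := abs_le.1 (log_bound2 (x := t) (by rw [abs_of_nonneg h0]; linarith))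
  rw [abs_of_nonneg h0] at h
  have h3 : 2 * t ^ 3 ≤ t / 8 := by nlinarith [sq_nonneg t]
  have h2 : t ^ 2 / 2 ≤ t / 8 := by nlinarith
  have h4 : 0 ≤ t ^ 2 := by positivity
  rw [abs_le]
  constructor <;> linarith [h.1, h.2]

set_option maxHeartbeats 1000000 in
/-- For a typical configuration the expansion of `ln(E₁E₂)` holds with an explicit error. The term
`m hfun (k / m)` coming from `E₂` cancels exactly against the first-order Taylor expansion of
`∑ z_i hfun (a_i / z_i)` at `k / m`, because `∑ z_i = m` and `∑ a_i = k`. -/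
lemma expansion {n m k : ℕ} {a z : Fin n → ℕ} {C η : ℝ} (hn : 0 < n) (hak : ∑ i, a i = k)
    (hzm : ∑ i, z i = m) (hη8 : η ≤ 1 / 8)
    (T : Typical n (fun i => (a i : ℝ)) (fun i => z i / ((m : ℝ) / n) - 1) ((k : ℝ) / n)
      ((m : ℝ) / n) (Real.sqrt n) C η) :
    (∀ i, a i ≤ z i) ∧ |logE1E2 n m a z - errExpr n m a| ≤ 400 * C ^ 2 * η := by
  have hn' : (0 : ℝ) < n := by positivity
  have hn1 : (1 : ℝ) ≤ n := by exact_mod_cast hn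
  have hμ := T.hμ
  have hη0 := T.hη0
  have hm0 : (0 : ℝ) < m := by
    by_contra! h
    have : (m : ℝ) / n ≤ 0 := div_nonpos_of_nonpos_of_nonneg h hn'.le
    linarith
  have hμ8 : 8 ≤ (m : ℝ) / n := by nlinarith [T.hCμ, T.hC]
  have hzq : ∀ i, (m : ℝ) / n * (1 + ((z i : ℝ) / ((m : ℝ) / n) - 1)) = z i := fun i => by
    field_simp
    ring
  have hz4 : ∀ i, (4 : ℝ) ≤ z i := fun i => by
    have h := (T.q_bds i).1
    rw [← hzq i]
    nlinarith
  have hz0 : ∀ i, (0 : ℝ) < z i := fun i => by linarith [hz4 i]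
  have haz : ∀ i, (2 : ℝ) * a i ≤ z i := fun i => by
    have h := T.hs i
    simp only [hzq] at h
    rw [div_le_iff₀ (hz0 i)] at h
    nlinarith [hz0 i]
  have hz4' : ∀ i, 4 ≤ z i := fun i => by exact_mod_cast hz4 i
  have haz' : ∀ i, 2 * a i ≤ z i := fun i => by exact_mod_cast haz i
  have htk : (k : ℝ) / n / ((m : ℝ) / n) = k / m := by field_simp
  have ht : (k : ℝ) / m ≤ η := by
    rw [← htk]
    exact T.ht
  have hm8 : (8 : ℝ) ≤ m := by
    rw [le_div_iff₀ hn'] at hμ8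
    nlinarith
  have hkm : (4 : ℝ) * k ≤ m := by
    rw [div_le_iff₀ hm0] at ht
    nlinarith
  have hm4' : 4 ≤ m := by exact_mod_cast (by linarith : (4 : ℝ) ≤ m)
  have hkm' : 4 * k ≤ m := by exact_mod_cast hkm
  refine ⟨fun i => by have := haz' i; omega, ?_⟩
  have hlog : logE1E2 n m a z =
      (∑ i, Real.log ((Nat.descFactorial (z i) (a i) : ℝ) / (z i : ℝ) ^ (a i))) -
        Real.log ((Nat.descFactorial m k : ℝ) / (m : ℝ) ^ k) := by
    unfold logE1E2
    have hpos : ∀ i, (0 : ℝ) < (Nat.descFactorial (z i) (a i) : ℝ) / (z i : ℝ) ^ (a i) := by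
      intro i
      have h1 : 0 < Nat.descFactorial (z i) (a i) :=
        Nat.descFactorial_pos.2 (by have := haz' i; omega)
      have := hz0 i
      positivity
    have hd : (0 : ℝ) < Nat.descFactorial m k := by
      exact_mod_cast Nat.descFactorial_pos.2 (by omega)
    rw [hak, Real.log_mul (prod_pos fun i _ => hpos i).ne' (by positivity),
      Real.log_prod fun i _ => (hpos i).ne', ← inv_div (Nat.descFactorial m k : ℝ), Real.log_inv]
    ring
  have hD : |(∑ i, Real.log ((Nat.descFactorial (z i) (a i) : ℝ) / (z i : ℝ) ^ (a i))) -
      ∑ i, emApprox (a i) (z i)| ≤ 72 * C ^ 2 * η := by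
    rw [← sum_sub_distrib]
    calc _ ≤ ∑ i, |Real.log ((Nat.descFactorial (z i) (a i) : ℝ) / (z i : ℝ) ^ (a i)) -
          emApprox (a i) (z i)| := abs_sum_le_sum_abs _ _
      _ ≤ ∑ i, 24 * (a i : ℝ) / (z i : ℝ) ^ 3 :=
          sum_le_sum fun i _ => log_descFactorial _ _ (hz4' i) (haz' i)
      _ ≤ _ := by
          have h := T.rem
          simpa only [hzq] using h
  have hDm := log_descFactorial k m hm4' (by omega)
  have hk0 : (0 : ℝ) ≤ (k : ℝ) / m := by positivity
  have hDm' : 24 * (k : ℝ) / (m : ℝ) ^ 3 ≤ 24 * η := by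
    have e : 24 * (k : ℝ) / (m : ℝ) ^ 3 = 24 * (k / m) / (m : ℝ) ^ 2 := by field_simp
    have h1 : 1 ≤ (m : ℝ) ^ 2 := by nlinarith
    rw [e, div_le_iff₀ (by positivity)]
    nlinarith [mul_le_mul_of_nonneg_left h1 hη0.le]
  have hzR : ∑ i, (z i : ℝ) = m := by exact_mod_cast hzm
  have haR : ∑ i, (a i : ℝ) = k := by exact_mod_cast hak
  have hbreg := T.bregman_sum
  have hlogs := T.log_sum
  have hthird := T.third
  simp only [hzq, htk] at hbreg hlogs hthird
  have hcancel : ∑ i, (z i : ℝ) * (hfun (a i / z i) - hfun (k / m) -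
      Real.log (1 - (k : ℝ) / m) * (a i / z i - k / m)) =
      (∑ i, (z i : ℝ) * hfun (a i / z i)) - m * hfun (k / m) := by
    have h1 : ∀ i, (z i : ℝ) * (hfun (a i / z i) - hfun (k / m) -
      Real.log (1 - (k : ℝ) / m) * (a i / z i - k / m)) =
      (z i : ℝ) * hfun (a i / z i) - (z i : ℝ) * hfun (k / m) -
        Real.log (1 - (k : ℝ) / m) * (a i - z i * (k / m)) := by
      intro i
      have := hz0 i
      field_simp
    rw [sum_congr rfl fun i _ => h1 i, sum_sub_distrib, sum_sub_distrib, ← mul_sum,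
      sum_sub_distrib, ← sum_mul, ← sum_mul, hzR, haR]
    field_simp
    ring
  rw [hcancel] at hbreg
  have hem : ∑ i, emApprox (a i) (z i) = (∑ i, (z i : ℝ) * hfun (a i / z i)) +
      (∑ i, -(1 / 2 * Real.log (1 - (a i : ℝ) / z i))) -
      ∑ i, (a i : ℝ) / (12 * z i * (z i - a i)) := by
    rw [← sum_add_distrib, ← sum_sub_distrib]
    exact sum_congr rfl fun i _ => by unfold emApprox; ring
  have hemk : emApprox k m = m * hfun (k / m) - 1 / 2 * Real.log (1 - (k : ℝ) / m) -
      (k : ℝ) / (12 * m * (m - k)) := rfl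
  have hl := abs_le.1 (abs_log_one_sub_le hk0 (by linarith))
  have hc : (k : ℝ) / (12 * m * (m - k)) ≤ η := by
    have e : (k : ℝ) / (12 * m * (m - k)) = k / m / (12 * (m - k)) := by
      field_simp
    have h1 : 1 ≤ 12 * ((m : ℝ) - k) := by linarith
    rw [e, div_le_iff₀ (by linarith)]
    nlinarith
  have hc0 : 0 ≤ (k : ℝ) / (12 * m * (m - k)) := by
    have : (0 : ℝ) ≤ (m : ℝ) - k := by linarith
    positivity
  have hBV : ∑ i, ((a i : ℝ) - k / n) ^ 2 = ∑ i, (a i : ℝ) ^ 2 - (k : ℝ) ^ 2 / n := by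
    have h' : ∑ i, (a i : ℝ) ^ 2 =
        n * ((k : ℝ) / n) ^ 2 + ∑ i, ((a i : ℝ) - k / n) ^ 2 := T.sum_a_sq
    have e : (n : ℝ) * ((k : ℝ) / n) ^ 2 = (k : ℝ) ^ 2 / n := by field_simp
    linarith
  have herr : errExpr n m a =
      -(1 / 2 * ((∑ i, ((a i : ℝ) - k / n) ^ 2) / ((m : ℝ) / n) +
        ((k : ℝ) / n) ^ 2 * n / ((m : ℝ) / n) ^ 2)) +
      (1 / 2 * ((k : ℝ) / n * n / ((m : ℝ) / n) + (k : ℝ) / n * n / ((m : ℝ) / n) ^ 2) +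
        1 / 4 * (((k : ℝ) / n) ^ 2 * n / ((m : ℝ) / n) ^ 2)) -
      (k : ℝ) / n * n / (12 * ((m : ℝ) / n) ^ 2) := by
    unfold errExpr plantV
    rw [hBV, haR]
    field_simp
    ring
  rw [hlog, herr]
  rw [hem] at hD
  rw [hemk] at hDm
  have b1 := abs_le.1 hD
  have b2 := abs_le.1 (hDm.trans hDm')
  have b3 := abs_le.1 hbreg
  have b4 := abs_le.1 hlogs
  have b5 := abs_le.1 hthird
  have hCη : η ≤ C ^ 2 * η := by nlinarith [T.one_le_sq]
  rw [abs_le]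
  constructor <;>
    linarith [b1.1, b1.2, b2.1, b2.2, b3.1, b3.2, b4.1, b4.2, b5.1, b5.2, hl.1, hl.2]

/-! ### Good throws give typical configurations -/

set_option maxHeartbeats 1000000 in
/-- A good throw `y`, together with `δ` times the planting, is a typical configuration `z`; here
`δ = 0` is the standard and `δ = 1` the planted distribution. In the planted case the additional
terms are controlled by `∑ (a_i - α)² ≤ C μ`. -/
lemma typical_of_good {n m k M : ℕ} {a y z : Fin n → ℕ} {C η δ : ℝ} (hn : 0 < n)
    (hm : 0 < m) (hak : ∑ i, a i = k) (hyM : ∑ i, y i = M) (hδ0 : 0 ≤ δ) (hδ1 : δ ≤ 1)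
    (hM : (M : ℝ) = m - δ * k) (hz : ∀ i, (z i : ℝ) = y i + δ * a i)
    (hC : 1 ≤ C) (hη0 : 0 < η) (hη8 : η ≤ 1 / 8)
    (h1 : k * Real.sqrt n ≤ C * m) (h2 : ∑ i, ((a i : ℝ) - k / n) ^ 2 ≤ C * ((m : ℝ) / n))
    (h3 : n * Real.sqrt n ≤ C * m) (hlarge : 64 * C ^ 2 ≤ η ^ 2 * Real.sqrt n)
    (hgood : GoodEvent n M ((m : ℝ) / n) (η / 8) (fun i => (a i : ℝ) - k / n) y) :
    Typical n (fun i => (a i : ℝ)) (fun i => z i / ((m : ℝ) / n) - 1) ((k : ℝ) / n)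
      ((m : ℝ) / n) (Real.sqrt n) C η := by
  have hn' : (0 : ℝ) < n := by positivity
  have hn1 : (1 : ℝ) ≤ n := by exact_mod_cast hn
  have hm' : (0 : ℝ) < m := by positivity
  obtain ⟨r, hr⟩ : ∃ r, r = Real.sqrt n := ⟨_, rfl⟩
  obtain ⟨g1, g2, g3⟩ := hgood
  rw [← hr] at h1 h3 hlarge g3 ⊢
  have hr0 : 0 < r := by rw [hr]; positivity
  have hr2 : r ^ 2 = n := by rw [hr]; exact Real.sq_sqrt hn'.le
  have hr1 : 1 ≤ r := by nlinarith
  obtain ⟨μ, hμ⟩ : ∃ μ, μ = (m : ℝ) / n := ⟨_, rfl⟩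
  obtain ⟨α, hα⟩ : ∃ α, α = (k : ℝ) / n := ⟨_, rfl⟩
  rw [← hμ] at h2 g1 g2 g3 ⊢
  rw [← hα] at h2 g3 ⊢
  have hmμ : (m : ℝ) = μ * n := by rw [hμ]; field_simp
  have hkα : (k : ℝ) = α * n := by rw [hα]; field_simp
  have hμ0 : 0 < μ := by rw [hμ]; positivity
  have hα0 : 0 ≤ α := by rw [hα]; positivity
  have hαr : α * r ≤ C * μ := by
    rw [hmμ, hkα] at h1
    have : n * (α * r) ≤ n * (C * μ) := by linarith
    exact le_of_mul_le_mul_left this hn'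
  have hrμ : r ≤ C * μ := by
    rw [hmμ] at h3
    have : n * r ≤ n * (C * μ) := by linarith
    exact le_of_mul_le_mul_left this hn'
  have hC2 : C ≤ C ^ 2 := by nlinarith
  have hηsq : η ^ 2 ≤ η := by nlinarith
  have hCr : 64 * C ≤ η * r := by
    have : η ^ 2 * r ≤ η * r := by gcongr
    linarith
  have hCμ' : 64 * C ≤ η ^ 2 * μ := by
    have h : η ^ 2 * r ≤ η ^ 2 * (C * μ) := by gcongr
    have : C * (64 * C) ≤ C * (η ^ 2 * μ) := by linarith
    exact le_of_mul_le_mul_left this (by linarith)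
  have hCμ : C ≤ η * μ := by
    have : η ^ 2 * μ ≤ η * μ := by gcongr
    linarith
  have hαμ : α ≤ η / 4 * μ := by
    have h : C * μ ≤ η * r / 64 * μ := by
      gcongr
      linarith
    have h' : 0 ≤ r * (η * μ) := by positivity
    have : r * α ≤ r * (η / 4 * μ) := by linarith
    exact le_of_mul_le_mul_left this hr0
  have hbi : ∀ i, |(a i : ℝ) - α| ≤ η / 4 * μ := by
    intro i
    have h : ((a i : ℝ) - α) ^ 2 ≤ ∑ i, ((a i : ℝ) - α) ^ 2 :=
      single_le_sum (f := fun i => ((a i : ℝ) - α) ^ 2) (fun i _ => sq_nonneg _) (mem_univ i)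
    refine abs_le_of_sq_le_sq ?_ (by positivity)
    have h' : C * μ ≤ η ^ 2 * μ / 64 * μ := by
      gcongr
      linarith
    have h'' : 0 ≤ (η * μ) ^ 2 := by positivity
    calc ((a i : ℝ) - α) ^ 2 ≤ η ^ 2 * μ / 64 * μ := (h.trans h2).trans h'
      _ ≤ (η / 4 * μ) ^ 2 := by linarith
  have haR : ∑ i, (a i : ℝ) = α * n := by rw [← hkα]; exact_mod_cast hak
  have hyR : ∑ i, (y i : ℝ) = M := by exact_mod_cast hyM
  have hb0 : ∑ i, ((a i : ℝ) - α) = 0 := by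
    rw [sum_sub_distrib, haR]
    simp
    ring
  have hMn : (M : ℝ) / n = μ - δ * α := by
    rw [hM, hμ, hα]
    ring
  have hw : ∀ i, (z i : ℝ) / μ - 1 = (((y i : ℝ) - (M : ℝ) / n) + δ * (a i - α)) / μ := by
    intro i
    rw [hz, hMn]
    field_simp
    ring
  have hq : ∀ i, |(z i : ℝ) / μ - 1| ≤ η / 2 := by
    intro i
    rw [hw, abs_div, abs_of_pos hμ0, div_le_iff₀ hμ0]
    have e1 : |δ * ((a i : ℝ) - α)| ≤ η / 4 * μ := by
      rw [abs_mul, abs_of_nonneg hδ0]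
      exact (mul_le_of_le_one_left (abs_nonneg _) hδ1).trans (hbi i)
    refine (abs_add_le _ _).trans ?_
    have e2 : 0 ≤ η * μ := by positivity
    linarith [g1 i]
  have hcross : ∑ i, ((a i : ℝ) - α) * ((y i : ℝ) - (M : ℝ) / n) =
      ∑ i, ((a i : ℝ) - α) * (y i : ℝ) := by
    simp only [mul_sub ((a _ : ℝ) - α), sum_sub_distrib, ← sum_mul, hb0]
    ring
  have hB0 : 0 ≤ ∑ i, ((a i : ℝ) - α) ^ 2 := sum_nonneg fun i _ => sq_nonneg _
  have hδB0 : 0 ≤ δ * ∑ i, ((a i : ℝ) - α) ^ 2 := by positivity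
  have hδB : δ * ∑ i, ((a i : ℝ) - α) ^ 2 ≤ C * μ :=
    (mul_le_of_le_one_left hB0 hδ1).trans h2
  have hg3 := abs_le.1 g3
  have hg2 := abs_le.1 g2
  constructor
  · exact hr2
  · exact hr0
  · exact hC
  · exact hη0
  · linarith
  · exact hμ0
  · exact hα0
  · exact fun i => by positivity
  · exact hαr
  · exact hrμ
  · exact hCμ
  · exact hb0
  · exact h2
  · exact fun i => (hq i).trans (by linarith)
  · simp only [hw]
    rw [← sum_div, sum_add_distrib, ← mul_sum, hb0, sum_centered hn y hyM]
    simp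
  · have e1 : ∑ i, ((z i : ℝ) / μ - 1) ^ 2 = (collM n M y + (M - (M : ℝ) / n) +
        2 * δ * ∑ i, ((a i : ℝ) - α) * (y i : ℝ) +
        δ * (δ * ∑ i, ((a i : ℝ) - α) ^ 2)) / μ ^ 2 := by
      rw [← sum_centered_sq hn y hyM, ← hcross, mul_sum, mul_sum, mul_sum, ← sum_add_distrib,
        ← sum_add_distrib, sum_div]
      refine sum_congr rfl fun i _ => ?_
      rw [hw]
      ring
    have e2 : (n : ℝ) / μ = μ * n / μ ^ 2 := by field_simp
    rw [e1, e2, ← sub_div, abs_div, abs_of_pos (by positivity : 0 < μ ^ 2), ← mul_div_assoc]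
    gcongr
    have hrn : r ≤ n := by
      rw [← hr2]
      exact le_self_pow₀ hr1 two_ne_zero
    have f1 : δ * (δ * ∑ i, ((a i : ℝ) - α) ^ 2) ≤ C * μ :=
      (mul_le_of_le_one_left hδB0 hδ1).trans hδB
    have f1' : 0 ≤ δ * (δ * ∑ i, ((a i : ℝ) - α) ^ 2) := by positivity
    have hCn : 64 * C ≤ η * n := hCr.trans (by gcongr)
    have f2 : 64 * (C * μ) ≤ η * (μ * n) := by
      have : 64 * C * μ ≤ η * n * μ := by gcongr
      linarith
    have f3 : |2 * δ * ∑ i, ((a i : ℝ) - α) * (y i : ℝ)| ≤ η / 4 * (μ * n) := by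
      rw [abs_mul, abs_of_nonneg (by positivity)]
      have s1 : η / 8 * (μ * r) ≤ η / 8 * (μ * n) := by gcongr
      have s2 : |∑ i, ((a i : ℝ) - α) * (y i : ℝ)| ≤ η / 8 * (μ * n) := g3.trans s1
      have s3 := mul_le_of_le_one_left (abs_nonneg (∑ i, ((a i : ℝ) - α) * (y i : ℝ))) hδ1
      linarith
    have f3' := abs_le.1 f3
    have f4 : (M : ℝ) = μ * n - δ * (α * n) := by rw [hM, hmμ, hkα]
    have f5 : δ * (α * n) ≤ η / 4 * (μ * n) := by
      have s1 : α * n ≤ η / 4 * μ * n := by gcongr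
      have s2 : 0 ≤ α * n := by positivity
      exact (mul_le_of_le_one_left s2 hδ1).trans (s1.trans_eq (by ring))
    have f5' : 0 ≤ δ * (α * n) := by positivity
    have f6 : (M : ℝ) / n ≤ μ := by
      rw [hMn]
      linarith [mul_nonneg hδ0 hα0]
    have f6' : 0 ≤ (M : ℝ) / n := by positivity
    have f7 : μ ≤ C * μ := le_mul_of_one_le_left hμ0.le hC
    have f8 : 0 ≤ η * (μ * n) := by positivity
    rw [abs_le]
    constructor <;> linarith [hg2.1, hg2.2, f3'.1, f3'.2]
  · have e1 : ∑ i, ((a i : ℝ) - α) * ((z i : ℝ) / μ - 1) =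
        (∑ i, ((a i : ℝ) - α) * (y i : ℝ) + δ * ∑ i, ((a i : ℝ) - α) ^ 2) / μ := by
      rw [← hcross, mul_sum, ← sum_add_distrib, sum_div]
      refine sum_congr rfl fun i _ => ?_
      rw [hw]
      ring
    rw [e1, abs_div, abs_of_pos hμ0, div_le_iff₀ hμ0]
    have f1 : C * μ ≤ η * r / 64 * μ := by
      gcongr
      linarith
    have f2 : 0 ≤ η * r * μ := by positivity
    rw [abs_le]
    constructor <;> linarith [hg3.1, hg3.2]
  · intro i
    have hqi := abs_le.1 (hq i)
    have e : μ * (1 + ((z i : ℝ) / μ - 1)) = z i := by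
      field_simp
      ring
    have hzi : 3 / 4 * μ ≤ μ * (1 + ((z i : ℝ) / μ - 1)) := by
      have : μ * (3 / 4) ≤ μ * (1 + ((z i : ℝ) / μ - 1)) := by
        gcongr
        linarith [hqi.1]
      linarith
    have hμη : 0 ≤ η * μ := by positivity
    have hai : (a i : ℝ) ≤ η / 2 * μ := by linarith [(abs_le.1 (hbi i)).2]
    rw [div_le_iff₀ (by linarith)]
    have : η * (3 / 4 * μ) ≤ η * (μ * (1 + ((z i : ℝ) / μ - 1))) := by gcongr
    linarith
  · have hμη : 0 ≤ η * μ := by positivity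
    rw [div_le_iff₀ hμ0]
    linarith

/-! ### Size estimates common to the three regimes -/

/-- The size estimates that all three regimes provide: `m` is at least of order `k √n` and
`n √n`, and the fluctuation of the planting is at most of order `m / n`. -/
def SizeBounds (n m k : ℕ) (a : Fin n → ℕ) (C : ℝ) : Prop :=
  0 < n ∧ 0 < m ∧ k * Real.sqrt n ≤ C * m ∧
    ∑ i, ((a i : ℝ) - k / n) ^ 2 ≤ C * ((m : ℝ) / n) ∧ n * Real.sqrt n ≤ C * m

lemma sum_dev_sq_eq {n k : ℕ} (hn : 0 < n) {a : Fin n → ℕ} (hak : ∑ i, a i = k) :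
    ∑ i, ((a i : ℝ) - k / n) ^ 2 = n * plantV n a := by
  have hn' : (n : ℝ) ≠ 0 := by positivity
  have haR : ∑ i, (a i : ℝ) = k := by exact_mod_cast hak
  have e : ∀ i, ((a i : ℝ) - k / n) ^ 2 =
      (a i : ℝ) ^ 2 - 2 * (k / n) * a i + ((k : ℝ) / n) ^ 2 := fun i => by ring
  simp only [e, plantV, sum_add_distrib, sum_sub_distrib, ← mul_sum, haR]
  simp only [sum_const, card_univ, Fintype.card_fin, nsmul_eq_mul]
  rw [mul_sub, mul_div_cancel₀ _ hn']
  field_simp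
  ring

/-- Since the `a i` are integers, `∑ a_i² ≥ k`; a planting of fewer than `n / 2` balls therefore
has `V` at least of order `k / n`. -/
lemma plantV_ge {n k : ℕ} (hn : 0 < n) {a : Fin n → ℕ} (hak : ∑ i, a i = k)
    (hk : (k : ℝ) ≤ n / 2) : (k : ℝ) / (2 * n) ≤ plantV n a := by
  have hn' : (0 : ℝ) < n := by positivity
  have haR : ∑ i, (a i : ℝ) = k := by exact_mod_cast hak
  have h : (k : ℝ) ≤ ∑ i, (a i : ℝ) ^ 2 := by
    rw [← haR]
    refine sum_le_sum fun i _ => ?_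
    exact_mod_cast Nat.le_self_pow two_ne_zero (a i)
  have h1 : (k : ℝ) / n ≤ (∑ i, (a i : ℝ) ^ 2) / n := by gcongr
  have h2 : (k : ℝ) / n ≤ 1 / 2 := by
    rw [div_le_iff₀ hn']
    linarith
  have h3 : ((k : ℝ) / n) ^ 2 ≤ 1 / 2 * (k / n) := by
    rw [sq]
    gcongr
  have h4 : (k : ℝ) / (2 * n) = 1 / 2 * (k / n) := by
    field_simp
  rw [plantV, haR, h4]
  linarith

lemma rpow_three_halves (n : ℕ) : (n : ℝ) ^ ((3 : ℝ) / 2) = n * Real.sqrt n := by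
  rcases Nat.eq_zero_or_pos n with rfl | hn
  · simp
  have hn' : (0 : ℝ) < n := by positivity
  rw [show (3 : ℝ) / 2 = 1 + 1 / 2 by norm_num, Real.rpow_add hn', Real.rpow_one,
    Real.sqrt_eq_rpow]

/-- In the flat and intermediate regimes `V` is at most of order `k / n^{3/2}`, which forces
`k ≥ n / 2`. -/
lemma sizeBounds_of_flat {n m k : ℕ} {a : Fin n → ℕ} {L c : ℝ} (hn : 0 < n)
    (hak : ∑ i, a i = k) (hk : 0 < k) (hc : 0 < c) (hL : 0 < L)
    (hV : (n : ℝ) ^ ((3 : ℝ) / 2) * plantV n a / k ≤ L) (hm : c ≤ (m : ℝ) / (k * Real.sqrt n))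
    (hlarge : 2 * L < Real.sqrt n) :
    SizeBounds n m k a (1 + 2 / c + L / c) := by
  have hn' : (0 : ℝ) < n := by positivity
  have hk' : (0 : ℝ) < k := by positivity
  obtain ⟨r, hr⟩ : ∃ r, r = Real.sqrt n := ⟨_, rfl⟩
  have hr0 : 0 < r := by rw [hr]; positivity
  have hr2 : r ^ 2 = n := by rw [hr]; exact Real.sq_sqrt hn'.le
  unfold SizeBounds
  rw [rpow_three_halves] at hV
  rw [← hr] at hV hm hlarge ⊢
  rw [div_le_iff₀ hk'] at hV
  rw [le_div_iff₀ (by positivity)] at hm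
  have hkr : k * r ≤ m / c := by
    rw [le_div_iff₀ hc]
    linarith
  have hm0 : (0 : ℝ) < m := lt_of_lt_of_le (by positivity) hm
  have hkn : (n : ℝ) / 2 ≤ k := by
    by_contra! h
    have h1 := plantV_ge hn hak h.le
    have h2 : n * r * ((k : ℝ) / (2 * n)) ≤ n * r * plantV n a := by gcongr
    have h3 : n * r * ((k : ℝ) / (2 * n)) = r / 2 * k := by field_simp
    have h4 : L * k < r / 2 * k := by
      gcongr
      linarith
    linarith
  have p1 : 0 ≤ (m : ℝ) / c := by positivity
  have p2 : 0 ≤ L * (m / c) := by positivity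
  have eC : (1 + 2 / c + L / c) * m = m + 2 * (m / c) + L * (m / c) := by ring
  refine ⟨hn, by exact_mod_cast hm0, ?_, ?_, ?_⟩
  · rw [eC]
    linarith
  · rw [sum_dev_sq_eq hn hak, ← mul_div_assoc, eC, le_div_iff₀ hn']
    have h1 : r * (n * r * plantV n a) ≤ r * (L * k) := by gcongr
    have h2 : r * (n * r * plantV n a) = n * plantV n a * n := by
      rw [← hr2]
      ring
    have h3 : L * (k * r) ≤ L * (m / c) := by gcongr
    linarith
  · rw [eC]
    have : (n : ℝ) / 2 * r ≤ k * r := by gcongr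
    linarith

/-- In the hilly regime `V ≥ k / n^{3/2}` gives `m ≳ k √n`; the bound `m ≳ n √n` follows from
`k ≥ n / 2`, or else from `V ≥ k / (2n)` and `k ≥ √n`. -/
lemma sizeBounds_of_hilly {n m k : ℕ} {a : Fin n → ℕ} {c : ℝ} (hn : 0 < n)
    (hak : ∑ i, a i = k) (hk : Real.sqrt n ≤ k) (hc : 0 < c)
    (hV : 1 ≤ (n : ℝ) ^ ((3 : ℝ) / 2) * plantV n a / k)
    (hm : c ≤ (m : ℝ) / (plantV n a * (n : ℝ) ^ 2)) :
    SizeBounds n m k a (1 + 2 / c) := by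
  have hn' : (0 : ℝ) < n := by positivity
  obtain ⟨r, hr⟩ : ∃ r, r = Real.sqrt n := ⟨_, rfl⟩
  have hr0 : 0 < r := by rw [hr]; positivity
  have hr2 : r ^ 2 = n := by rw [hr]; exact Real.sq_sqrt hn'.le
  unfold SizeBounds
  rw [rpow_three_halves] at hV
  rw [← hr] at hV hk ⊢
  have hk' : (0 : ℝ) < k := hr0.trans_le hk
  rw [one_le_div hk'] at hV
  have hV0 : 0 < plantV n a := by
    by_contra! h
    have : n * r * plantV n a ≤ 0 := mul_nonpos_of_nonneg_of_nonpos (by positivity) h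
    linarith
  rw [le_div_iff₀ (by positivity)] at hm
  have hm0 : (0 : ℝ) < m := lt_of_lt_of_le (by positivity) hm
  have hVm : plantV n a * (n : ℝ) ^ 2 ≤ m / c := by
    rw [le_div_iff₀ hc]
    linarith
  have hkr : k * r ≤ m / c := by
    have h1 : k * r ≤ n * r * plantV n a * r := by gcongr
    have h2 : n * r * plantV n a * r = plantV n a * (n : ℝ) ^ 2 := by
      rw [← hr2]
      ring
    linarith
  have p1 : 0 ≤ (m : ℝ) / c := by positivity
  have eC : (1 + 2 / c) * m = m + 2 * (m / c) := by ring
  refine ⟨hn, by exact_mod_cast hm0, ?_, ?_, ?_⟩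
  · rw [eC]
    linarith
  · rw [sum_dev_sq_eq hn hak, ← mul_div_assoc, eC, le_div_iff₀ hn']
    linarith
  · rw [eC]
    rcases le_total (k : ℝ) (n / 2) with h | h
    · have h1 := plantV_ge hn hak h
      have h2 : (k : ℝ) / (2 * n) * (n : ℝ) ^ 2 ≤ plantV n a * (n : ℝ) ^ 2 := by gcongr
      have h3 : (k : ℝ) / (2 * n) * (n : ℝ) ^ 2 = n * k / 2 := by field_simp
      have h4 : n * r ≤ n * k := by gcongr
      linarith
    · have : (n : ℝ) / 2 * r ≤ k * r := by gcongr
      linarith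

lemma tendsto_sqrt_nat : Tendsto (fun n : ℕ => Real.sqrt n) atTop atTop :=
  Real.tendsto_sqrt_atTop.comp tendsto_natCast_atTop_atTop

lemma eventually_sizeBounds (A : (n : ℕ) → Fin n → ℕ) (m k : ℕ → ℕ)
    (hka : ∀ n, ∑ i, A n i = k n)
    (hk : Tendsto (fun n : ℕ => (k n : ℝ) / Real.sqrt n) atTop atTop)
    (hreg : SomeRegime A m k) :
    ∃ C : ℝ, 1 ≤ C ∧ ∀ᶠ n in atTop, SizeBounds n (m n) (k n) (A n) C := by
  have hksqrt : ∀ᶠ n : ℕ in atTop, Real.sqrt n ≤ k n := by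
    filter_upwards [hk.eventually_ge_atTop 1, eventually_gt_atTop 0] with n h hn
    have hn' : (0 : ℝ) < Real.sqrt n := by positivity
    rwa [one_le_div hn'] at h
  have hflat : ∀ lam c : ℝ, 0 ≤ lam → 0 < c → IntermediateRegime A m k lam c →
      ∃ C : ℝ, 1 ≤ C ∧ ∀ᶠ n in atTop, SizeBounds n (m n) (k n) (A n) C := by
    intro lam c hlam hc ⟨hV, hm⟩
    refine ⟨1 + 2 / (c / 2) + (lam + 1) / (c / 2), ?_, ?_⟩
    · have : 0 ≤ 2 / (c / 2) + (lam + 1) / (c / 2) := by positivity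
      linarith
    filter_upwards [hV.eventually_le_const (lt_add_one lam),
      hm.eventually_const_le (half_lt_self hc), hksqrt, eventually_gt_atTop 0,
      tendsto_sqrt_nat.eventually_gt_atTop (2 * (lam + 1))] with n h1 h2 h3 h4 h5
    have hk0 : (0 : ℝ) < k n := lt_of_lt_of_le (by positivity) h3
    exact sizeBounds_of_flat h4 (hka n) (by exact_mod_cast hk0) (by positivity) (by positivity)
      h1 h2 h5
  rcases hreg with ⟨c, hc, h⟩ | ⟨lam, c, hlam, hc, h⟩ | ⟨c, hc, hV, hm⟩
  · exact hflat 0 c le_rfl hc h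
  · exact hflat lam c hlam.le hc h
  · refine ⟨1 + 2 / (c / 2), ?_, ?_⟩
    · have : 0 ≤ 2 / (c / 2) := by positivity
      linarith
    filter_upwards [hV.eventually_ge_atTop 1, hm.eventually_const_le (half_lt_self hc), hksqrt,
      eventually_gt_atTop 0] with n h1 h2 h3 h4
    exact sizeBounds_of_hilly h4 (hka n) h3 (by positivity) h1 h2

/-! ### Convergence in probability -/

lemma tendsto_failBound {C η : ℝ} (hC : 1 ≤ C) (hη : 0 < η) :
    Tendsto (fun n : ℕ => failBound C η n (Real.sqrt n / C)) atTop (𝓝 0) := by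
  have hc : 0 < η ^ 2 / C / 4 := by positivity
  have h1 : Tendsto (fun x : ℝ => x ^ 2 * Real.exp (-(η ^ 2 / C / 4) * x)) atTop (𝓝 0) := by
    simpa using tendsto_rpow_mul_exp_neg_mul_atTop_nhds_zero 2 _ hc
  have h2 := (h1.comp tendsto_sqrt_nat).const_mul 2
  have hinv : ∀ D : ℝ, Tendsto (fun n : ℕ => D / ((n : ℝ) * η ^ 2)) atTop (𝓝 0) := fun D =>
    (tendsto_natCast_atTop_atTop.atTop_mul_const (by positivity : 0 < η ^ 2)).const_div_atTop D
  have h3 := (h2.add (hinv 2)).add (hinv C)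
  simp only [mul_zero, add_zero] at h3
  refine h3.congr fun n => ?_
  simp only [failBound, Function.comp_apply]
  rw [Real.sq_sqrt (Nat.cast_nonneg n), ← mul_assoc]
  congr 4
  ring

/-- The finite-size form of the result, for `M` balls thrown at random on top of `δ` times the
planting; `δ = 0` is the standard and `δ = 1` the planted distribution. -/
lemma stE_indicator_shift_ge {n m k M : ℕ} {a : Fin n → ℕ} {C η δ ε : ℝ}
    (hsize : SizeBounds n m k a C) (hC : 1 ≤ C) (hη0 : 0 < η) (hη8 : η ≤ 1 / 8)
    (hε : 400 * C ^ 2 * η < ε) (hlarge : 64 * C ^ 2 ≤ η ^ 2 * Real.sqrt n)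
    (hak : ∑ i, a i = k) (hδ0 : 0 ≤ δ) (hδ1 : δ ≤ 1) (hM : (M : ℝ) = m - δ * k)
    (f : (Fin n → ℕ) → Fin n → ℕ) (hf : ∀ y i, (f y i : ℝ) = y i + δ * a i) :
    1 - failBound C (η / 8) n (Real.sqrt n / C) ≤ expec (stProb n M)
      ({y | f y ∈ {z : Fin n → ℕ | (∀ i, a i ≤ z i) ∧
        |logE1E2 n m a z - errExpr n m a| < ε}}.indicator 1) := by
  obtain ⟨hn, hm, h1, h2, h3⟩ := hsize
  have hn' : (0 : ℝ) < n := by positivity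
  have hm' : (0 : ℝ) < m := by positivity
  have hb : ∑ i, ((a i : ℝ) - k / n) = 0 := by
    have haR : ∑ i, (a i : ℝ) = k := by exact_mod_cast hak
    simp only [sum_sub_distrib, haR, sum_const, card_univ, Fintype.card_fin, nsmul_eq_mul]
    field_simp
    ring
  have hMm : (M : ℝ) / n ≤ m / n := by
    have : 0 ≤ δ * k := by positivity
    have hMm' : (M : ℝ) ≤ m := by linarith
    exact div_le_div_of_nonneg_right hMm' hn'.le
  refine le_trans ?_ (stE_indicator_ge (C := C) (μ := (m : ℝ) / n) hn
    (by positivity : 0 < η / 8) (by linarith) (by positivity) hMm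
    (fun i => (a i : ℝ) - k / n) hb h2 _ fun y hy hgood => ?_)
  · have : Real.sqrt n / C ≤ (m : ℝ) / n := by
      rw [div_le_div_iff₀ (by positivity) hn']
      linarith
    unfold failBound
    gcongr
  · have hz : ∑ i, f y i = m := by
      have : ∑ i, (f y i : ℝ) = m := by
        have haR : ∑ i, (a i : ℝ) = k := by exact_mod_cast hak
        have hyR : ∑ i, (y i : ℝ) = M := by exact_mod_cast hy
        simp only [hf, sum_add_distrib, ← mul_sum, haR, hyR, hM]
        ring
      exact_mod_cast this
    obtain ⟨e1, e2⟩ := expansion hn hak hz hη8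
      (typical_of_good hn hm hak hy hδ0 hδ1 hM (hf y) hC hη0 hη8 h1 h2 h3 hlarge hgood)
    exact ⟨e1, e2.trans_lt hε⟩

/-- in all three regimes, under both ST and PL, whp the sampled
configuration has `z_i ≥ a_i` for all `i` and
`ln(E₁E₂) = −V(A)n²/(2m) + kn/(2m) + 5kn²/(12m²) − k²n/(4m²) + o(1)`. -/
theorem error_term_asymptotics (A : (n : ℕ) → Fin n → ℕ) (m k : ℕ → ℕ)
    (hka : ∀ n, ∑ i, A n i = k n) (hkm : ∀ n, k n ≤ m n)
    (hk : Tendsto (fun n : ℕ => (k n : ℝ) / Real.sqrt n) atTop atTop)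
    (hreg : SomeRegime A m k) :
    ∀ ε : ℝ, 0 < ε →
      Tendsto (fun n : ℕ => probOf (stProb n (m n))
          {z | (∀ i, A n i ≤ z i) ∧
            |logE1E2 n (m n) (A n) z - errExpr n (m n) (A n)| < ε}) atTop (𝓝 1) ∧
      Tendsto (fun n : ℕ => probOf (plProb n (m n) (A n))
          {z | (∀ i, A n i ≤ z i) ∧
            |logE1E2 n (m n) (A n) z - errExpr n (m n) (A n)| < ε}) atTop (𝓝 1) := by
  intro ε hε
  obtain ⟨C, hC, hsize⟩ := eventually_sizeBounds A m k hka hk hreg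
  obtain ⟨η, hη0, hη8, hηε⟩ : ∃ η : ℝ, 0 < η ∧ η ≤ 1 / 8 ∧ 400 * C ^ 2 * η < ε := by
    refine ⟨min (1 / 8) (ε / (800 * C ^ 2)), by positivity, min_le_left _ _, ?_⟩
    calc 400 * C ^ 2 * min (1 / 8) (ε / (800 * C ^ 2))
        ≤ 400 * C ^ 2 * (ε / (800 * C ^ 2)) := by gcongr; exact min_le_right _ _
      _ = ε / 2 := by field_simp; norm_num
      _ < ε := half_lt_self hε
  have hlarge : ∀ᶠ n : ℕ in atTop, 64 * C ^ 2 ≤ η ^ 2 * Real.sqrt n :=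
    (tendsto_sqrt_nat.const_mul_atTop (by positivity : 0 < η ^ 2)).eventually_ge_atTop _
  have hlow : Tendsto (fun n : ℕ => 1 - failBound C (η / 8) n (Real.sqrt n / C)) atTop (𝓝 1) := by
    simpa using (tendsto_failBound hC (by positivity : 0 < η / 8)).const_sub 1
  constructor
  · refine tendsto_of_tendsto_of_tendsto_of_le_of_le' hlow tendsto_const_nhds ?_ ?_
    · filter_upwards [hsize, hlarge] with n h1 h2
      rw [probOf_stProb]
      exact stE_indicator_shift_ge (M := m n) (δ := 0) h1 hC hη0 hη8 hηε h2 (hka n) le_rfl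
        zero_le_one (by ring) (fun y => y) fun y i => by ring
    · filter_upwards [eventually_gt_atTop 0] with n hn
      rw [probOf_stProb]
      exact stE_indicator_le_one hn _
  · refine tendsto_of_tendsto_of_tendsto_of_le_of_le' hlow tendsto_const_nhds ?_ ?_
    · filter_upwards [hsize, hlarge] with n h1 h2
      rw [probOf_plProb n (m n) (A n) ((hka n).trans_le (hkm n))]
      refine stE_indicator_shift_ge (δ := 1) h1 hC hη0 hη8 hηε h2 (hka n) zero_le_one le_rfl
        ?_ (fun y => y + A n) fun y i => ?_
      · rw [hka, Nat.cast_sub (hkm n)]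
        ring
      · simp
    · filter_upwards [eventually_gt_atTop 0] with n hn
      rw [probOf_plProb n (m n) (A n) ((hka n).trans_le (hkm n))]
      exact stE_indicator_le_one hn _
end
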